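/- arXiv:0709.0402 — 9 statements merged into one kernel-verified Lean document; each statement's English description precedes it below -/
import Mathlib

section
/- Let x : [0, ∞) → ℝ be a continuous function. For ε > 0 and t ≥ 0 define J_ε(t) = (1/ε) ∫_0^t (1_{x(s+ε) > 0} − 1_{x(s) > 0})(x(s+ε) − x(s)) ds, I³_ε(t) = (1/ε) ∫_0^t [x((u+ε) ∧ t)⁺ 1_{x(u) ≤ 0} + x((u+ε) ∧ t)⁻ 1_{x(u) > 0}] du, and I⁴_ε(t) = (1/ε) ∫_0^t [x(u)⁻ 1_{x((u+ε) ∧ t) > 0} + x(u)⁺ 1_{x((u+ε) ∧ t) ≤ 0}] du. Then for every T > 0, sup_{t ∈ [0,T]} |J_ε(t) − I³_ε(t) − I⁴_ε(t)| tends to 0 as ε → 0⁺. -/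
open MeasureTheory Set Filter


lemma aux_int (g f : ℝ → ℝ) (hg : Continuous g) (hf : Measurable f) (h : ∀ u, |f u| ≤ |g u|) (a b : ℝ) :
    IntervalIntegrable f volume a b := by
  refine (hg.intervalIntegrable a b).mono_fun hf.aestronglyMeasurable ?_
  exact Eventually.of_forall (fun u => by simpa using h u)

lemma aux_bound (a b : ℝ) :
    |((if 0 < b then (1:ℝ) else 0) - (if 0 < a then 1 else 0)) * (b - a)| ≤ |b - a| := by
  split_ifs <;> simp [abs_sub_comm]

lemma aux_eq (a b : ℝ) :
    ((if 0 < b then (1:ℝ) else 0) - (if 0 < a then 1 else 0)) * (b - a)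
    = (max b 0 * (if a ≤ 0 then (1:ℝ) else 0) + max (-b) 0 * (if 0 < a then 1 else 0))
      + (max (-a) 0 * (if 0 < b then (1:ℝ) else 0) + max a 0 * (if b ≤ 0 then 1 else 0)) := by
  rcases le_or_gt a 0 with ha | ha <;> rcases le_or_gt b 0 with hb | hb
  · simp [ha, hb, not_lt.mpr ha, not_lt.mpr hb]
  · simp [ha, hb, not_lt.mpr ha, not_le.mpr hb, hb.le]; ring
  · simp [ha, hb, not_le.mpr ha, not_lt.mpr hb, ha.le]; ring
  · simp [ha, hb, not_le.mpr ha, not_le.mpr hb, ha.le, hb.le]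

lemma aux_b3 (a b : ℝ) :
    |max b 0 * (if a ≤ 0 then (1:ℝ) else 0) + max (-b) 0 * (if 0 < a then 1 else 0)| ≤ |b| := by
  rcases le_or_gt a 0 with ha | ha
  · simp only [ha, not_lt.mpr ha, if_true, if_false]
    rcases le_total b 0 with hb | hb <;> simp [hb]
  · simp only [ha, not_le.mpr ha, if_true, if_false]
    rcases le_total b 0 with hb | hb <;> simp [hb]

lemma aux_b4 (a b : ℝ) :
    |max (-a) 0 * (if 0 < b then (1:ℝ) else 0) + max a 0 * (if b ≤ 0 then 1 else 0)| ≤ |a| := by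
  rw [add_comm]; exact aux_b3 b a

lemma aux_main (y : ℝ → ℝ) (hy : Continuous y) (ε δ t : ℝ) (hε : 0 < ε) (ht : 0 ≤ t)
    (hδ : ∀ s e, 0 ≤ s → s ≤ t → 0 ≤ e → e ≤ ε → |y (s + e) - y s| ≤ δ) :
    |(1 / ε) * (∫ s in (0:ℝ)..t,
              ((if 0 < y (s + ε) then (1:ℝ) else 0) - (if 0 < y s then 1 else 0))
                * (y (s + ε) - y s))
            - (1 / ε) * (∫ u in (0:ℝ)..t,
                (max (y (min (u + ε) t)) 0 * (if y u ≤ 0 then (1:ℝ) else 0)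
                  + max (-(y (min (u + ε) t))) 0 * (if 0 < y u then 1 else 0)))
            - (1 / ε) * (∫ u in (0:ℝ)..t,
                (max (-(y u)) 0 * (if 0 < y (min (u + ε) t) then (1:ℝ) else 0)
                  + max (y u) 0 * (if y (min (u + ε) t) ≤ 0 then 1 else 0)))| ≤ 2 * δ := by
  have hm := hy.measurable
  have c1 : Continuous (fun s => y (s + ε)) := by fun_prop
  have c2 : Continuous (fun s => y (min (s + ε) t)) := by fun_prop
  have ind1 : ∀ g : ℝ → ℝ, Continuous g → Measurable (fun s => if 0 < g s then (1:ℝ) else 0) :=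
    fun g hg => Measurable.ite (measurableSet_lt measurable_const hg.measurable)
      measurable_const measurable_const
  have ind2 : ∀ g : ℝ → ℝ, Continuous g → Measurable (fun s => if g s ≤ 0 then (1:ℝ) else 0) :=
    fun g hg => Measurable.ite (measurableSet_le hg.measurable measurable_const)
      measurable_const measurable_const
  have m1 := c1.measurable
  have m2 := c2.measurable
  have i1 := fun a b => aux_int (fun s => y (s + ε) - y s)
    (fun s => ((if 0 < y (s + ε) then (1:ℝ) else 0) - (if 0 < y s then 1 else 0)) * (y (s + ε) - y s)) (c1.sub hy)
    (((ind1 _ c1).sub (ind1 _ hy)).mul (m1.sub hm)) (fun u => aux_bound (y u) (y (u + ε))) a b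
  have i2 := fun a b => aux_int (fun s => y (min (s + ε) t))
    (fun s => max (y (min (s + ε) t)) 0 * (if y s ≤ 0 then (1:ℝ) else 0) + max (-(y (min (s + ε) t))) 0 * (if 0 < y s then 1 else 0)) c2
    (((m2.max measurable_const).mul (ind2 _ hy)).add
      ((m2.neg.max measurable_const).mul (ind1 _ hy)))
    (fun u => aux_b3 (y u) (y (min (u + ε) t))) a b
  have i3 := fun a b => aux_int y
    (fun s => max (-(y s)) 0 * (if 0 < y (min (s + ε) t) then (1:ℝ) else 0) + max (y s) 0 * (if y (min (s + ε) t) ≤ 0 then 1 else 0)) hy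
    (((hm.neg.max measurable_const).mul (ind1 _ c2)).add
      ((hm.max measurable_const).mul (ind2 _ c2)))
    (fun u => aux_b4 (y u) (y (min (u + ε) t))) a b
  have i4 := fun a b => ((i1 a b).sub (i2 a b)).sub (i3 a b)
  rw [← mul_sub, ← mul_sub]
  have e1 := intervalIntegral.integral_sub ((i1 0 t).sub (i2 0 t)) (i3 0 t)
  have e2 := intervalIntegral.integral_sub (i1 0 t) (i2 0 t)
  have key : |(∫ s in (0:ℝ)..t,
      ((((if 0 < y (s + ε) then (1:ℝ) else 0) - (if 0 < y s then 1 else 0))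
                * (y (s + ε) - y s))
      - (max (y (min (s + ε) t)) 0 * (if y s ≤ 0 then (1:ℝ) else 0)
                  + max (-(y (min (s + ε) t))) 0 * (if 0 < y s then 1 else 0)))
      - (max (-(y s)) 0 * (if 0 < y (min (s + ε) t) then (1:ℝ) else 0)
                  + max (y s) 0 * (if y (min (s + ε) t) ≤ 0 then 1 else 0)))| ≤ 2 * δ * ε := by
    have hδ0 : 0 ≤ δ := (abs_nonneg _).trans (hδ 0 0 le_rfl ht le_rfl hε.le)
    have hc0 : 0 ≤ max 0 (t - ε) := le_max_left _ _
    have hct : max 0 (t - ε) ≤ t := max_le ht (by linarith)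
    rw [← intervalIntegral.integral_add_adjacent_intervals (i4 0 (max 0 (t - ε)))
      (i4 (max 0 (t - ε)) t)]
    have z : (∫ s in (0:ℝ)..(max 0 (t - ε)),
      ((((if 0 < y (s + ε) then (1:ℝ) else 0) - (if 0 < y s then 1 else 0))
                * (y (s + ε) - y s))
      - (max (y (min (s + ε) t)) 0 * (if y s ≤ 0 then (1:ℝ) else 0)
                  + max (-(y (min (s + ε) t))) 0 * (if 0 < y s then 1 else 0)))
      - (max (-(y s)) 0 * (if 0 < y (min (s + ε) t) then (1:ℝ) else 0)
                  + max (y s) 0 * (if y (min (s + ε) t) ≤ 0 then 1 else 0))) = 0 := by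
      apply intervalIntegral.integral_zero_ae
      refine Eventually.of_forall (fun s hs => ?_)
      rw [uIoc_of_le hc0] at hs
      have : s + ε ≤ t := by
        rcases le_max_iff.mp hs.2 with h | h
        · exact absurd hs.1 (not_lt.mpr h)
        · linarith
      rw [min_eq_left this, aux_eq]; ring
    rw [z, zero_add]
    have b := intervalIntegral.norm_integral_le_of_norm_le_const (a := max 0 (t - ε)) (b := t)
      (C := 2 * δ) (f := fun s => ((((if 0 < y (s + ε) then (1:ℝ) else 0) - (if 0 < y s then 1 else 0))
                * (y (s + ε) - y s))
      - (max (y (min (s + ε) t)) 0 * (if y s ≤ 0 then (1:ℝ) else 0)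
                  + max (-(y (min (s + ε) t))) 0 * (if 0 < y s then 1 else 0)))
      - (max (-(y s)) 0 * (if 0 < y (min (s + ε) t) then (1:ℝ) else 0)
                  + max (y s) 0 * (if y (min (s + ε) t) ≤ 0 then 1 else 0))) ?_
    · rw [Real.norm_eq_abs, abs_of_nonneg (sub_nonneg.mpr hct)] at b
      refine b.trans (mul_le_mul_of_nonneg_left ?_ (by positivity))
      have := le_max_right 0 (t - ε)
      linarith
    · intro s hs
      rw [uIoc_of_le hct] at hs
      have hs0 : 0 ≤ s := hc0.trans hs.1.le
      rw [sub_sub, ← aux_eq, Real.norm_eq_abs]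
      refine (abs_sub _ _).trans ?_
      have h1 := (aux_bound (y s) (y (s + ε))).trans (hδ s ε hs0 hs.2 hε.le le_rfl)
      have h2 := hδ s (min (s + ε) t - s) hs0 hs.2
        (sub_nonneg.mpr (le_min (by linarith) hs.2))
        (by have := min_le_left (s + ε) t; linarith)
      rw [add_sub_cancel] at h2
      have h3 := (aux_bound (y s) (y (min (s + ε) t))).trans h2
      linarith
  rw [e1, e2] at key
  rw [abs_mul, abs_of_pos (by positivity : 0 < 1 / ε), one_div, inv_mul_le_iff₀ hε]
  linarith

/-- For a continuous function `x` on `[0,∞)`, with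
`J_ε(t) = (1/ε) ∫_0^t (1_{x(s+ε)>0} − 1_{x(s)>0})(x(s+ε) − x(s)) ds`,
`I³_ε(t) = (1/ε) ∫_0^t [x((u+ε)∧t)⁺ 1_{x(u)≤0} + x((u+ε)∧t)⁻ 1_{x(u)>0}] du`, and
`I⁴_ε(t) = (1/ε) ∫_0^t [x(u)⁻ 1_{x((u+ε)∧t)>0} + x(u)⁺ 1_{x((u+ε)∧t)≤0}] du`,
the quantity `sup_{t ∈ [0,T]} |J_ε(t) − I³_ε(t) − I⁴_ε(t)|` tends to `0` as `ε → 0⁺`,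
for every `T > 0`. -/
theorem statement2 (x : ℝ → ℝ) (hx : ContinuousOn x (Ici 0)) (T : ℝ) (hT : 0 < T) :
    Tendsto (fun ε : ℝ =>
        ⨆ t : Icc (0:ℝ) T,
          |(1 / ε) * (∫ s in (0:ℝ)..t,
              ((if 0 < x (s + ε) then (1:ℝ) else 0) - (if 0 < x s then 1 else 0))
                * (x (s + ε) - x s))
            - (1 / ε) * (∫ u in (0:ℝ)..t,
                (max (x (min (u + ε) t)) 0 * (if x u ≤ 0 then (1:ℝ) else 0)
                  + max (-(x (min (u + ε) t))) 0 * (if 0 < x u then 1 else 0)))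
            - (1 / ε) * (∫ u in (0:ℝ)..t,
                (max (-(x u)) 0 * (if 0 < x (min (u + ε) t) then (1:ℝ) else 0)
                  + max (x u) 0 * (if x (min (u + ε) t) ≤ 0 then 1 else 0)))|)
      (nhdsWithin 0 (Ioi 0)) (nhds 0) := by
  obtain ⟨y, hy, hxy⟩ : ∃ y : ℝ → ℝ, Continuous y ∧ ∀ s, 0 ≤ s → x s = y s :=
    ⟨fun s => x (max s 0), hx.comp_continuous (by fun_prop) (fun s => mem_Ici.mpr (le_max_right _ _)),
      fun s hs => by simp [hs]⟩
  rw [Metric.tendsto_nhds]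
  intro η hη
  have huc := isCompact_Icc.uniformContinuousOn_of_continuous
    (hy.continuousOn (s := Icc 0 (T + 1)))
  rw [Metric.uniformContinuousOn_iff] at huc
  obtain ⟨r, hr, huc⟩ := huc (η / 4) (by positivity)
  have hpos : (0:ℝ) < min r 1 := by positivity
  filter_upwards [Ioo_mem_nhdsGT hpos] with ε hε
  have hε0 : 0 < ε := hε.1
  have hεr : ε < r := hε.2.trans_le (min_le_left _ _)
  have hε1 : ε < 1 := hε.2.trans_le (min_le_right _ _)
  rw [Real.dist_eq, sub_zero, abs_of_nonneg (Real.iSup_nonneg (fun _ => abs_nonneg _))]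
  refine lt_of_le_of_lt (Real.iSup_le (a := 2 * (η / 4)) ?_ (by positivity)) (by linarith)
  rintro ⟨t, ht0, htT⟩
  have main := aux_main y hy ε (η / 4) t hε0 ht0 (by
    intro s e hs hst he heε
    have := huc (s + e) ⟨by linarith, by linarith⟩ s ⟨hs, by linarith⟩
      (by rw [Real.dist_eq, add_sub_cancel_left, abs_of_nonneg he]; linarith)
    rw [Real.dist_eq] at this
    exact this.le)
  refine le_of_eq_of_le ?_ main
  have hu : ∀ u ∈ uIcc 0 t, x u = y u ∧ x (u + ε) = y (u + ε) ∧
      x (min (u + ε) t) = y (min (u + ε) t) := by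
    intro u hu
    rw [uIcc_of_le ht0] at hu
    have h0 := hu.1
    exact ⟨hxy _ h0, hxy _ (by linarith), hxy _ (le_min (by linarith) ht0)⟩
  congr 1
  congr 1
  · congr 1
    · congr 1
      refine intervalIntegral.integral_congr (fun u h => ?_)
      obtain ⟨h1, h2, h3⟩ := hu u h
      simp only [h1, h2]
    · congr 1
      refine intervalIntegral.integral_congr (fun u h => ?_)
      obtain ⟨h1, h2, h3⟩ := hu u h
      simp only [h1, h3]
  · congr 1
    refine intervalIntegral.integral_congr (fun u h => ?_)
    obtain ⟨h1, h2, h3⟩ := hu u h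
    simp only [h1, h3]
end

section
/- Let x : [0, ∞) → ℝ be a continuous function, and let 0 < ε ≤ t. Then (1/ε) ∫_0^t (x((s+ε) ∧ t) − x(s)) 1_{x((s+ε) ∧ t) > 0} ds = x(t)⁺ − (1/ε) ∫_0^ε x(u)⁺ du + (1/ε) ∫_0^t [x(u)⁻ 1_{x((u+ε) ∧ t) > 0} + x(u)⁺ 1_{x((u+ε) ∧ t) ≤ 0}] du. -/
open MeasureTheory Set

theorem aux_cont (x : ℝ → ℝ) (hx : Continuous x) (ε t : ℝ)
    (hε : 0 < ε) (hεt : ε ≤ t) :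
    (∫ s in (0:ℝ)..t,
        (x (min (s + ε) t) - x s) * (if 0 < x (min (s + ε) t) then (1:ℝ) else 0))
      = ε * max (x t) 0 - (∫ u in (0:ℝ)..ε, max (x u) 0)
        + (∫ u in (0:ℝ)..t,
            (max (-(x u)) 0 * (if 0 < x (min (u + ε) t) then (1:ℝ) else 0)
              + max (x u) 0 * (if x (min (u + ε) t) ≤ 0 then 1 else 0))) := by
  have hp : Continuous fun u => max (x u) 0 := by fun_prop
  have hm : Continuous fun u => max (x (min (u + ε) t)) 0 := by fun_prop
  have hc : Continuous fun u => x (min (u + ε) t) := by fun_prop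
  have hR : IntervalIntegrable (fun u => max (-(x u)) 0 * (if 0 < x (min (u + ε) t) then (1:ℝ) else 0)
              + max (x u) 0 * (if x (min (u + ε) t) ≤ 0 then (1:ℝ) else 0)) volume 0 t := by
    refine (hx.intervalIntegrable 0 t).mono_fun ?_ ?_
    · apply Measurable.aestronglyMeasurable
      have h1 : Measurable fun u => if 0 < x (min (u + ε) t) then (1:ℝ) else 0 :=
        Measurable.ite (measurableSet_lt measurable_const hc.measurable) measurable_const
          measurable_const
      have h2 : Measurable fun u => if x (min (u + ε) t) ≤ 0 then (1:ℝ) else 0 :=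
        Measurable.ite (measurableSet_le hc.measurable measurable_const) measurable_const
          measurable_const
      exact ((hx.measurable.neg.max measurable_const).mul h1).add
        ((hx.measurable.max measurable_const).mul h2)
    · refine Filter.Eventually.of_forall fun u => ?_
      simp only [Real.norm_eq_abs]
      by_cases h : 0 < x (min (u + ε) t)
      · simp only [h, not_le.mpr h, if_true, if_false]
        grind
      · simp only [h, not_lt.mp h, if_true, if_false]
        grind
  have key : (∫ s in (0:ℝ)..t,
        (x (min (s + ε) t) - x s) * (if 0 < x (min (s + ε) t) then (1:ℝ) else 0))
      = ∫ s in (0:ℝ)..t, ((max (x (min (s + ε) t)) 0 - max (x s) 0) +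
        (max (-(x s)) 0 * (if 0 < x (min (s + ε) t) then (1:ℝ) else 0)
              + max (x s) 0 * (if x (min (s + ε) t) ≤ 0 then (1:ℝ) else 0))) := by
    congr 1
    funext u
    by_cases h : 0 < x (min (u + ε) t)
    · simp only [h, not_le.mpr h, if_true, if_false]
      grind
    · simp only [h, not_lt.mp h, if_true, if_false]
      grind
  rw [key, intervalIntegral.integral_add
    ((hm.intervalIntegrable 0 t).sub (hp.intervalIntegrable 0 t)) hR,
    intervalIntegral.integral_sub (hm.intervalIntegrable 0 t) (hp.intervalIntegrable 0 t)]
  have e1 : (∫ s in (0:ℝ)..t, max (x (min (s + ε) t)) 0)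
      = (∫ s in ε..t, max (x s) 0) + ε * max (x t) 0 := by
    have a : (∫ s in (0:ℝ)..t, max (x (min (s + ε) t)) 0)
        = ∫ s in ε..(t + ε), max (x (min s t)) 0 := by
      have := intervalIntegral.integral_comp_add_right (a := 0) (b := t)
        (fun s => max (x (min s t)) 0) ε
      simpa using this
    have hm' : Continuous fun u => max (x (min u t)) 0 := by fun_prop
    rw [a, ← intervalIntegral.integral_add_adjacent_intervals
      (hm'.intervalIntegrable ε t) (hm'.intervalIntegrable t (t + ε))]
    congr 1
    · apply intervalIntegral.integral_congr
      intro s hs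
      rw [uIcc_of_le hεt] at hs
      simp [min_eq_left hs.2]
    · have : (∫ s in t..(t + ε), max (x (min s t)) 0) = ∫ s in t..(t + ε), max (x t) 0 := by
        apply intervalIntegral.integral_congr
        intro s hs
        rw [uIcc_of_le (by linarith)] at hs
        simp [min_eq_right hs.1]
      rw [this]
      simp
  rw [e1, ← intervalIntegral.integral_add_adjacent_intervals
      (hp.intervalIntegrable 0 ε) (hp.intervalIntegrable ε t)]
  ring

/-- For a continuous function `x` on `[0,∞)` and `0 < ε ≤ t`,
`(1/ε) ∫_0^t (x((s+ε)∧t) − x(s)) 1_{x((s+ε)∧t)>0} ds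
  = x(t)⁺ − (1/ε) ∫_0^ε x(u)⁺ du
    + (1/ε) ∫_0^t [x(u)⁻ 1_{x((u+ε)∧t)>0} + x(u)⁺ 1_{x((u+ε)∧t)≤0}] du`. -/
theorem statement3 (x : ℝ → ℝ) (hx : ContinuousOn x (Ici 0)) (ε t : ℝ)
    (hε : 0 < ε) (hεt : ε ≤ t) :
    (1 / ε) * (∫ s in (0:ℝ)..t,
        (x (min (s + ε) t) - x s) * (if 0 < x (min (s + ε) t) then (1:ℝ) else 0))
      = max (x t) 0 - (1 / ε) * (∫ u in (0:ℝ)..ε, max (x u) 0)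
        + (1 / ε) * (∫ u in (0:ℝ)..t,
            (max (-(x u)) 0 * (if 0 < x (min (u + ε) t) then (1:ℝ) else 0)
              + max (x u) 0 * (if x (min (u + ε) t) ≤ 0 then 1 else 0))) := by
  have hy : Continuous fun s => x (max s 0) :=
    hx.comp_continuous (by fun_prop) (fun s => mem_Ici.mpr (le_max_right s 0))
  have H := aux_cont (fun s => x (max s 0)) hy ε t hε hεt
  have ht : 0 < t := lt_of_lt_of_le hε hεt
  have c1 : ∀ s ∈ uIcc 0 t, max s 0 = s ∧ max (min (s + ε) t) 0 = min (s + ε) t := by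
    intro s hs
    rw [uIcc_of_le ht.le] at hs
    exact ⟨max_eq_left hs.1, max_eq_left (le_min (by linarith [hs.1]) ht.le)⟩
  have i1 : (∫ s in (0:ℝ)..t, (x (max (min (s + ε) t) 0) - x (max s 0)) *
        (if 0 < x (max (min (s + ε) t) 0) then (1:ℝ) else 0)) = ∫ s in (0:ℝ)..t,
        (x (min (s + ε) t) - x s) * (if 0 < x (min (s + ε) t) then (1:ℝ) else 0) := by
    apply intervalIntegral.integral_congr
    intro s hs
    simp only [(c1 s hs).1, (c1 s hs).2]
  have i2 : (∫ u in (0:ℝ)..ε, max (x (max u 0)) 0) = ∫ u in (0:ℝ)..ε, max (x u) 0 := by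
    apply intervalIntegral.integral_congr
    intro s hs
    rw [uIcc_of_le hε.le] at hs
    simp only [max_eq_left hs.1]
  have i3 : (∫ u in (0:ℝ)..t,
            (max (-(x (max u 0))) 0 * (if 0 < x (max (min (u + ε) t) 0) then (1:ℝ) else 0)
              + max (x (max u 0)) 0 * (if x (max (min (u + ε) t) 0) ≤ 0 then (1:ℝ) else 0)))
      = ∫ u in (0:ℝ)..t,
            (max (-(x u)) 0 * (if 0 < x (min (u + ε) t) then (1:ℝ) else 0)
              + max (x u) 0 * (if x (min (u + ε) t) ≤ 0 then (1:ℝ) else 0)) := by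
    apply intervalIntegral.integral_congr
    intro s hs
    simp only [(c1 s hs).1, (c1 s hs).2]
  rw [i1, i2, i3, max_eq_left ht.le] at H
  rw [H]
  field_simp
end

section
/- Let T > 0 and let F : [0, T] → ℝ be a continuous nondecreasing function with F(0) = 0. Then sup_{t ∈ [0,T]} | (1/ε) ∫_0^t (F((u+ε) ∧ t) − F(u)) du − F(t) | tends to 0 as ε → 0⁺. Moreover, for every ε > 0 and t ∈ [0, T], (1/ε) ∫_0^t (F((u+ε) ∧ t) − F(u)) du = ∫_{(0,t]} (s ∧ ε)/ε dμ_F(s), where μ_F is the Lebesgue–Stieltjes measure associated with F. -/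
open MeasureTheory Set Filter

lemma aux_second (T : ℝ) (F : ℝ → ℝ)
    (hFm : MonotoneOn F (Icc 0 T))
    (μ : Measure ℝ)
    (hμ : ∀ a b : ℝ, 0 ≤ a → a ≤ b → b ≤ T →
      μ (Ioc a b) = ENNReal.ofReal (F b - F a)) (ε : ℝ) (hε : 0 < ε) (t : ℝ)
    (ht : t ∈ Icc (0:ℝ) T) :
      (1 / ε) * (∫ u in (0:ℝ)..t, (F (min (u + ε) t) - F u))
        = ∫ s in Ioc (0:ℝ) t, (min s ε) / ε ∂μ := by
  obtain ⟨h0, hT⟩ := ht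
  have hfin : IsFiniteMeasure (μ.restrict (Ioc 0 t)) := by
    refine ⟨?_⟩
    rw [Measure.restrict_apply_univ, hμ 0 t le_rfl h0 hT]
    exact ENNReal.ofReal_lt_top
  set A : Set (ℝ × ℝ) := {p | p.1 < p.2 ∧ p.2 ≤ p.1 + ε} with hA
  have hAm : MeasurableSet A := by
    apply MeasurableSet.inter
    · exact measurableSet_lt measurable_fst measurable_snd
    · exact measurableSet_le measurable_snd (measurable_fst.add_const ε)
  let f : ℝ → ℝ → ℝ := fun u s => A.indicator (fun _ => (1:ℝ)) (u, s)
  have hint : Integrable (Function.uncurry f)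
      ((volume.restrict (Ioc 0 t)).prod (μ.restrict (Ioc 0 t))) := by
    have : Function.uncurry f = A.indicator (fun _ => (1:ℝ)) := by
      ext ⟨u, s⟩; rfl
    rw [this]
    exact (integrable_const (1:ℝ)).indicator hAm
  have hswap := integral_integral_swap hint
  have h1 : ∀ u ∈ Ioc 0 t, ∫ s in Ioc 0 t, f u s ∂μ = F (min (u + ε) t) - F u := by
    intro u hu
    have e : (fun s => f u s) = (Ioc u (u + ε)).indicator (fun _ => (1:ℝ)) := by
      ext s
      simp only [f, indicator, hA, mem_setOf_eq, mem_Ioc]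
    have hle : u ≤ min (u + ε) t := le_min (by linarith) hu.2
    have e2 : Ioc u (u + ε) ∩ Ioc 0 t = Ioc u (min (u + ε) t) := by
      rw [Ioc_inter_Ioc, max_eq_left hu.1.le]
    rw [e, integral_indicator measurableSet_Ioc, Measure.restrict_restrict measurableSet_Ioc, e2]
    rw [integral_const, smul_eq_mul, mul_one, measureReal_def, Measure.restrict_apply_univ,
      hμ _ _ hu.1.le hle ((min_le_right _ _).trans hT), ENNReal.toReal_ofReal]
    exact sub_nonneg.2 (hFm ⟨hu.1.le, hu.2.trans hT⟩
      ⟨hu.1.le.trans hle, (min_le_right _ _).trans hT⟩ hle)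
  have h2 : ∀ s ∈ Ioc 0 t, ∫ u in Ioc 0 t, f u s = min s ε := by
    intro s hs
    have e : (fun u => f u s) = (Ico (s - ε) s).indicator (fun _ => (1:ℝ)) := by
      ext u
      have : (u < s ∧ s ≤ u + ε) ↔ (s - ε ≤ u ∧ u < s) := by
        constructor <;> rintro ⟨h, h'⟩ <;> constructor <;> linarith
      simp only [f, indicator, hA, mem_setOf_eq, mem_Ico, this]
    rw [e, integral_indicator measurableSet_Ico, restrict_Ioc_eq_restrict_Icc,
      Measure.restrict_restrict measurableSet_Ico]
    have e2 : Ico (s - ε) s ∩ Icc 0 t = Ico (max (s - ε) 0) s := by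
      ext u
      simp only [mem_inter_iff, mem_Ico, mem_Icc, max_le_iff]
      constructor
      · rintro ⟨⟨a, b⟩, c, d⟩; exact ⟨⟨a, c⟩, b⟩
      · rintro ⟨⟨a, c⟩, b⟩; exact ⟨⟨a, b⟩, c, b.le.trans hs.2⟩
    rw [e2, integral_const, smul_eq_mul, mul_one, measureReal_def, Measure.restrict_apply_univ,
      Real.volume_Ico, ENNReal.toReal_ofReal]
    · rcases le_total s ε with h | h
      · rw [max_eq_right (by linarith), min_eq_left h, sub_zero]
      · rw [max_eq_left (by linarith), min_eq_right h]; ring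
    · have := hs.1
      exact sub_nonneg.2 (max_le (by linarith) this.le)
  rw [intervalIntegral.integral_of_le h0, ← setIntegral_congr_fun measurableSet_Ioc h1, hswap,
    setIntegral_congr_fun measurableSet_Ioc h2, integral_div]
  ring

/-- For a continuous nondecreasing `F : [0,T] → ℝ` with `F(0) = 0` and
`μ_F` its Lebesgue–Stieltjes measure (characterized by `μ_F((a,b]) = F(b) − F(a)`),
`sup_{t ∈ [0,T]} |(1/ε) ∫_0^t (F((u+ε)∧t) − F(u)) du − F(t)|` tends to `0` as `ε → 0⁺`,
and for every `ε > 0` and `t ∈ [0,T]`,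
`(1/ε) ∫_0^t (F((u+ε)∧t) − F(u)) du = ∫_{(0,t]} (s∧ε)/ε dμ_F(s)`. -/
theorem statement6 (T : ℝ) (hT : 0 < T) (F : ℝ → ℝ)
    (hFc : ContinuousOn F (Icc 0 T)) (hFm : MonotoneOn F (Icc 0 T)) (hF0 : F 0 = 0)
    (μ : Measure ℝ)
    (hμ : ∀ a b : ℝ, 0 ≤ a → a ≤ b → b ≤ T →
      μ (Ioc a b) = ENNReal.ofReal (F b - F a)) :
    Tendsto (fun ε : ℝ =>
        ⨆ t : Icc (0:ℝ) T,
          |(1 / ε) * (∫ u in (0:ℝ)..t, (F (min (u + ε) t) - F u)) - F t|)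
      (nhdsWithin 0 (Ioi 0)) (nhds 0)
    ∧ ∀ ε : ℝ, 0 < ε → ∀ t ∈ Icc (0:ℝ) T,
      (1 / ε) * (∫ u in (0:ℝ)..t, (F (min (u + ε) t) - F u))
        = ∫ s in Ioc (0:ℝ) t, (min s ε) / ε ∂μ := by
  have key := aux_second T F hFm μ hμ
  refine ⟨?_, key⟩
  have hlim : Tendsto F (nhdsWithin 0 (Ioi 0)) (nhds 0) := by
    have h := hFc 0 ⟨le_rfl, hT.le⟩
    rw [ContinuousWithinAt, hF0] at h
    have h3 : nhdsWithin (0:ℝ) (Ioi 0) ≤ nhdsWithin 0 (Icc 0 T) := by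
      rw [← nhdsWithin_Ioc_eq_nhdsGT hT]
      exact nhdsWithin_mono _ Ioc_subset_Icc_self
    exact h.mono_left h3
  have hev : ∀ᶠ ε in nhdsWithin (0:ℝ) (Ioi 0), ε ∈ Ioc 0 T := Ioc_mem_nhdsGT hT
  refine tendsto_of_tendsto_of_tendsto_of_le_of_le' tendsto_const_nhds hlim ?_ ?_
  · exact Eventually.of_forall fun ε => Real.iSup_nonneg fun t => abs_nonneg _
  · filter_upwards [hev] with ε hε
    have hne : Nonempty (Icc (0:ℝ) T) := ⟨⟨0, le_rfl, hT.le⟩⟩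
    refine ciSup_le ?_
    rintro ⟨t, ht⟩
    show |(1 / ε) * (∫ u in (0:ℝ)..t, (F (min (u + ε) t) - F u)) - F t| ≤ F ε
    rw [key ε hε.1 t ht]
    have hfin : IsFiniteMeasure (μ.restrict (Ioc 0 t)) := by
      refine ⟨?_⟩
      rw [Measure.restrict_apply_univ, hμ 0 t le_rfl ht.1 ht.2]
      exact ENNReal.ofReal_lt_top
    have hpos : ∀ x ∈ Icc 0 T, 0 ≤ F x := fun x hx => by
      rw [← hF0]; exact hFm ⟨le_rfl, hT.le⟩ hx hx.1
    have hFt : F t = ∫ s in Ioc (0:ℝ) t, (1:ℝ) ∂μ := by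
      rw [integral_const, smul_eq_mul, mul_one, measureReal_def, Measure.restrict_apply_univ,
        hμ 0 t le_rfl ht.1 ht.2, hF0, sub_zero, ENNReal.toReal_ofReal (hpos t ht)]
    have hbd : ∀ s ∈ Ioc 0 t, 0 ≤ min s ε / ε ∧ min s ε / ε ≤ 1 := fun s hs =>
      ⟨div_nonneg (le_min hs.1.le hε.1.le) hε.1.le, (div_le_one hε.1).2 (min_le_right _ _)⟩
    have hi : IntegrableOn (fun s => min s ε / ε) (Ioc 0 t) μ := by
      refine Integrable.mono' (integrable_const (1:ℝ)) ?_ ?_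
      · exact (by fun_prop : Measurable fun s : ℝ => min s ε / ε).aestronglyMeasurable
      · refine (ae_restrict_iff' measurableSet_Ioc).2 (Eventually.of_forall fun s hs => ?_)
        rw [Real.norm_of_nonneg (hbd s hs).1]
        exact (hbd s hs).2
    have hone : IntegrableOn (fun _ => (1:ℝ)) (Ioc 0 t) μ := integrable_const (1:ℝ)
    have hup : ∫ s in Ioc (0:ℝ) t, min s ε / ε ∂μ ≤ F t := by
      rw [hFt]
      exact setIntegral_mono_on hi hone measurableSet_Ioc fun s hs => (hbd s hs).2
    have hind : IntegrableOn ((Ioc 0 ε).indicator (fun _ => (1:ℝ))) (Ioc 0 t) μ :=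
      hone.indicator measurableSet_Ioc
    have hm : 0 ≤ min ε t := le_min hε.1.le ht.1
    have hval : ∫ s in Ioc (0:ℝ) t, (Ioc 0 ε).indicator (fun _ => (1:ℝ)) s ∂μ ≤ F ε := by
      rw [integral_indicator measurableSet_Ioc, Measure.restrict_restrict measurableSet_Ioc,
        Ioc_inter_Ioc, max_self, integral_const, smul_eq_mul, mul_one, measureReal_def,
        Measure.restrict_apply_univ, hμ 0 _ le_rfl hm ((min_le_right _ _).trans ht.2), hF0,
        sub_zero, ENNReal.toReal_ofReal (hpos _ ⟨hm, (min_le_right _ _).trans ht.2⟩)]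
      exact hFm ⟨hm, (min_le_right _ _).trans ht.2⟩ ⟨hε.1.le, hε.2⟩ (min_le_left _ _)
    have hlow : F t ≤ (∫ s in Ioc (0:ℝ) t, min s ε / ε ∂μ)
        + ∫ s in Ioc (0:ℝ) t, (Ioc 0 ε).indicator (fun _ => (1:ℝ)) s ∂μ := by
      rw [← integral_add hi hind, hFt]
      refine setIntegral_mono_on hone (hi.add hind) measurableSet_Ioc fun s hs => ?_
      by_cases h : s ≤ ε
      · rw [indicator_of_mem (show s ∈ Ioc 0 ε from ⟨hs.1, h⟩)]
        linarith [(hbd s hs).1]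
      · rw [indicator_of_notMem (fun h' => h h'.2), min_eq_right (le_of_not_ge h),
          div_self hε.1.ne', add_zero]
    rw [abs_le]
    constructor
    · linarith
    · linarith [hpos ε ⟨hε.1.le, hε.2⟩]
end

section
/- For t > 0, let f(t, y) = ∫_ℝ (x + y)⁺ dγ_t(x), where γ_t is the centered Gaussian measure on ℝ with variance t. Then for every t > 0, the function y ↦ f(t, y) is differentiable on ℝ with derivative ∂f/∂y (t, y) = Φ(y/√t), where Φ is the standard normal distribution function. -/
open MeasureTheory Set

/-- The standard normal distribution function `Φ(z) = ∫_{−∞}^z e^{−x²/2}/√(2π) dx`. -/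
noncomputable def stdNormalCDF (z : ℝ) : ℝ :=
  ∫ x in Iic z, Real.exp (-x ^ 2 / 2) / Real.sqrt (2 * Real.pi)

lemma aux_cdf (t : ℝ) (ht : 0 < t) (y : ℝ) :
    (ProbabilityTheory.gaussianReal 0 (Real.toNNReal t)).real (Ioi (-y)) =
      stdNormalCDF (y / Real.sqrt t) := by
  have hs : 0 < Real.sqrt t := Real.sqrt_pos.2 ht
  have h := ProbabilityTheory.gaussianReal_map_const_mul (μ := 0) (v := 1) (-Real.sqrt t)
  have hv : NNReal.mk ((-Real.sqrt t) ^ 2) (sq_nonneg _) * 1 = Real.toNNReal t := by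
    ext
    simp [Real.sq_sqrt ht.le, Real.coe_toNNReal t ht.le]
  rw [hv, mul_zero] at h
  rw [← h, measureReal_def, Measure.map_apply (by fun_prop) measurableSet_Ioi]
  have hp : (fun x => -Real.sqrt t * x) ⁻¹' Ioi (-y) = Iio (y / Real.sqrt t) := by
    ext x
    simp only [mem_preimage, mem_Ioi, mem_Iio, lt_div_iff₀ hs]
    constructor <;> intro h <;> linarith
  rw [hp, ProbabilityTheory.gaussianReal_apply_eq_integral 0 one_ne_zero,
    ENNReal.toReal_ofReal (integral_nonneg fun x =>
      ProbabilityTheory.gaussianPDFReal_nonneg _ _ _), stdNormalCDF,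
    integral_Iic_eq_integral_Iio]
  congr 1
  ext x
  simp [ProbabilityTheory.gaussianPDFReal, div_eq_inv_mul]

/-- Let `f(t,y) = ∫ (x+y)⁺ dγ_t(x)` for `γ_t` the centered Gaussian measure
of variance `t > 0`. Then `y ↦ f(t,y)` is differentiable with derivative `Φ(y/√t)`. -/
theorem statement10 (t : ℝ) (ht : 0 < t) (y : ℝ) :
    HasDerivAt
      (fun y' : ℝ =>
        ∫ x, max (x + y') 0 ∂(ProbabilityTheory.gaussianReal 0 (Real.toNNReal t)))
      (stdNormalCDF (y / Real.sqrt t)) y := by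
  have hv : Real.toNNReal t ≠ 0 := by simpa using ht
  have hid : Integrable (fun x : ℝ => x) (ProbabilityTheory.gaussianReal 0 (Real.toNNReal t)) :=
    memLp_one_iff_integrable.1 (ProbabilityTheory.memLp_id_gaussianReal' 1 (by simp))
  have key := (hasDerivAt_integral_of_dominated_loc_of_lip
    (μ := ProbabilityTheory.gaussianReal 0 (Real.toNNReal t))
    (F := fun y' x : ℝ => max (x + y') 0) (x₀ := y) (s := univ) (bound := fun _ => 1)
    (F' := (Ioi (-y)).indicator 1) Filter.univ_mem ?_ ?_ ?_ ?_ ?_ ?_).2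
  · rwa [integral_indicator_one measurableSet_Ioi, aux_cdf t ht y] at key
  · exact Filter.Eventually.of_forall fun z => by
      exact Continuous.aestronglyMeasurable (by fun_prop)
  · exact (hid.add (integrable_const y)).sup (integrable_const 0)
  · exact (measurable_one.indicator measurableSet_Ioi).aestronglyMeasurable
  · refine Filter.Eventually.of_forall fun a => LipschitzOnWith.of_dist_le_mul fun u _ v _ => ?_
    simp only [Real.dist_eq]
    have := abs_max_sub_max_le_abs (a + u) (a + v) 0
    simpa using this
  · exact integrable_const _
  · have hne : ∀ᵐ a ∂(ProbabilityTheory.gaussianReal 0 (Real.toNNReal t)), a ≠ -y := by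
      apply (ProbabilityTheory.gaussianReal_absolutelyContinuous 0 hv).ae_le
      exact Measure.ae_ne volume (-y)
    filter_upwards [hne] with a ha
    rcases lt_or_gt_of_ne ha with h | h
    · rw [indicator_of_notMem (by simpa using h.le)]
      refine (hasDerivAt_const y (0:ℝ)).congr_of_eventuallyEq ?_
      filter_upwards [Iio_mem_nhds (show y < -a by linarith)] with z hz
      exact max_eq_right (by linarith [mem_Iio.1 hz])
    · rw [indicator_of_mem (by simpa using h)]
      refine ((hasDerivAt_id y).const_add a).congr_of_eventuallyEq ?_
      filter_upwards [Ioi_mem_nhds (show -a < y by linarith)] with z hz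
      exact max_eq_left (by linarith [mem_Ioi.1 hz])
end

section
/- For t > 0, let f(t, y) = ∫_ℝ (x + y)⁺ dγ_t(x), where γ_t is the centered Gaussian measure on ℝ with variance t. Then for every t > 0 and y ∈ ℝ, the second partial derivative in y satisfies ∂²f/∂y² (t, y) = φ(y/√t)/√t and the partial derivative in t satisfies ∂f/∂t (t, y) = (1/2) · φ(y/√t)/√t, where φ(z) = e^{−z²/2}/√(2π) is the standard normal density; in particular f solves the heat equation ∂f/∂t = (1/2) ∂²f/∂y² on (0, ∞) × ℝ. -/
open MeasureTheory Set

/-- The standard normal density `φ(z) = e^{−z²/2}/√(2π)`. -/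
noncomputable def stdNormalPDF (z : ℝ) : ℝ :=
  Real.exp (-z ^ 2 / 2) / Real.sqrt (2 * Real.pi)

/-- `f(t,y) = ∫ (x+y)⁺ dγ_t(x)` for `γ_t` the centered Gaussian measure of variance `t`. -/
noncomputable def gaussPosPart (t y : ℝ) : ℝ :=
  ∫ x, max (x + y) 0 ∂(ProbabilityTheory.gaussianReal 0 (Real.toNNReal t))

lemma std_eq (x : ℝ) : ProbabilityTheory.gaussianPDFReal 0 1 x = stdNormalPDF x := by
  simp [ProbabilityTheory.gaussianPDFReal, stdNormalPDF]
  ring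

lemma std_cont : Continuous stdNormalPDF := by
  unfold stdNormalPDF
  fun_prop

lemma std_int : Integrable stdNormalPDF := by
  have := ProbabilityTheory.integrable_gaussianPDFReal 0 1
  exact this.congr (Filter.Eventually.of_forall std_eq)

lemma std_neg (x : ℝ) : stdNormalPDF (-x) = stdNormalPDF x := by
  simp [stdNormalPDF]

lemma std_deriv (x : ℝ) : HasDerivAt stdNormalPDF (-(x * stdNormalPDF x)) x := by
  unfold stdNormalPDF
  have h : HasDerivAt (fun z : ℝ => -z ^ 2 / 2) (-x) x := by
    have := ((hasDerivAt_pow 2 x).neg).div_const 2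
    refine HasDerivAt.congr_deriv this ?_
    simp only [Nat.cast_ofNat, Nat.add_one_sub_one, pow_one]
    ring
  refine HasDerivAt.congr_deriv (h.exp.div_const (Real.sqrt (2 * Real.pi))) ?_
  ring

lemma std_mul_int : Integrable (fun x => x * stdNormalPDF x) := by
  have h := (integrable_mul_exp_neg_mul_sq (b := 1/2) (by norm_num)).div_const
    (Real.sqrt (2 * Real.pi))
  refine h.congr (Filter.Eventually.of_forall fun x => ?_)
  simp only [stdNormalPDF]
  rw [mul_div_assoc]
  rw [show -(1/2) * x ^ 2 = -x ^ 2 / 2 by ring]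

lemma std_tendsto : Filter.Tendsto stdNormalPDF Filter.atTop (nhds 0) := by
  have h : Filter.Tendsto (fun x : ℝ => -x ^ 2 / 2) Filter.atTop Filter.atBot := by
    have h2 : Filter.Tendsto (fun x : ℝ => x ^ 2 / 2) Filter.atTop Filter.atTop :=
      (Filter.tendsto_pow_atTop two_ne_zero).atTop_div_const (by norm_num)
    have := Filter.tendsto_neg_atTop_atBot.comp h2
    refine this.congr fun x => ?_
    simp only [Function.comp]; ring
  have := (Real.tendsto_exp_atBot.comp h).div_const (Real.sqrt (2 * Real.pi))
  rw [zero_div] at this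
  exact this

noncomputable def cdfN (a : ℝ) : ℝ := ∫ x in Ioi (-a), stdNormalPDF x

lemma cdfN_deriv (a : ℝ) : HasDerivAt cdfN (stdNormalPDF a) a := by
  have h : cdfN = fun a => cdfN 0 - ∫ x in (0:ℝ)..(-a), stdNormalPDF x := by
    funext a
    have := intervalIntegral.integral_Ioi_sub_Ioi' (f := stdNormalPDF) (μ := volume) (a := 0)
      (b := -a) std_int.integrableOn std_int.integrableOn
    simp only [cdfN, neg_zero]
    linarith
  rw [h]
  have h1 := (std_cont.integral_hasStrictDerivAt 0 (-a)).hasDerivAt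
  have h2 := (h1.comp a (hasDerivAt_neg a)).const_sub (cdfN 0)
  refine HasDerivAt.congr_deriv h2 ?_
  rw [std_neg]; ring

lemma int_mul (b : ℝ) : ∫ x in Ioi b, x * stdNormalPDF x = stdNormalPDF b := by
  have := integral_Ioi_of_hasDerivAt_of_tendsto' (a := b) (f := fun x => - stdNormalPDF x)
    (f' := fun x => x * stdNormalPDF x) (m := 0)
    (fun x _ => (std_deriv x).neg.congr_deriv (neg_neg _)) std_mul_int.integrableOn
    (by simpa using std_tendsto.neg)
  simpa using this

noncomputable def GG (a : ℝ) : ℝ := a * cdfN a + stdNormalPDF a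

lemma GG_deriv (a : ℝ) : HasDerivAt GG (cdfN a) a := by
  have := ((hasDerivAt_id a).mul (cdfN_deriv a)).add (std_deriv a)
  refine HasDerivAt.congr_deriv this ?_
  simp

lemma GG_eq (a : ℝ) : ∫ x, max (x + a) 0 ∂(ProbabilityTheory.gaussianReal 0 1) = GG a := by
  rw [ProbabilityTheory.integral_gaussianReal_eq_integral_smul one_ne_zero]
  have h : (fun x => ProbabilityTheory.gaussianPDFReal 0 1 x • max (x + a) 0)
      = (Ioi (-a)).indicator (fun x => x * stdNormalPDF x + a * stdNormalPDF x) := by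
    funext x
    rw [std_eq, smul_eq_mul]
    by_cases hx : x ∈ Ioi (-a)
    · rw [indicator_of_mem hx, max_eq_left (by simp at hx; linarith)]; ring
    · rw [indicator_of_notMem hx, max_eq_right (by simp at hx; linarith)]; ring
  rw [h, integral_indicator measurableSet_Ioi,
    integral_add std_mul_int.integrableOn (std_int.const_mul a).integrableOn, int_mul,
    integral_const_mul, std_neg, GG, cdfN]
  ring

lemma gpp_eq (t : ℝ) (ht : 0 < t) (y : ℝ) :
    gaussPosPart t y = Real.sqrt t * GG (y / Real.sqrt t) := by
  have hs : 0 < Real.sqrt t := Real.sqrt_pos.2 ht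
  have hm := ProbabilityTheory.gaussianReal_map_const_mul (μ := 0) (v := 1) (Real.sqrt t)
  have hv : NNReal.mk (Real.sqrt t ^ 2) (sq_nonneg _) * 1 = Real.toNNReal t := by
    ext; simp [Real.sq_sqrt ht.le, ht.le]
  rw [mul_zero, hv] at hm
  rw [gaussPosPart, ← hm, integral_map (by fun_prop) (by fun_prop), ← GG_eq,
    ← integral_const_mul]
  congr 1
  funext x
  rw [← mul_max_of_nonneg _ _ hs.le |>.symm, mul_zero]
  congr 1
  field_simp

lemma gpp_dy (t : ℝ) (ht : 0 < t) (y : ℝ) :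
    HasDerivAt (fun z => gaussPosPart t z) (cdfN (y / Real.sqrt t)) y := by
  have hs : 0 < Real.sqrt t := Real.sqrt_pos.2 ht
  have h : (fun z => gaussPosPart t z) = fun z => Real.sqrt t * GG (z / Real.sqrt t) :=
    funext fun z => gpp_eq t ht z
  rw [h]
  have := ((GG_deriv (y / Real.sqrt t)).comp y
    ((hasDerivAt_id y).div_const (Real.sqrt t))).const_mul (Real.sqrt t)
  refine HasDerivAt.congr_deriv this ?_
  field_simp

/-- For `t > 0` and `y ∈ ℝ`, the function `f(t,y) = ∫ (x+y)⁺ dγ_t(x)`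
satisfies `∂²f/∂y²(t,y) = φ(y/√t)/√t` and `∂f/∂t(t,y) = (1/2) φ(y/√t)/√t`; in particular
`f` solves the heat equation `∂f/∂t = (1/2) ∂²f/∂y²` on `(0,∞) × ℝ`. -/
theorem statement11 (t : ℝ) (ht : 0 < t) (y : ℝ) :
    HasDerivAt (fun y' : ℝ => deriv (fun z => gaussPosPart t z) y')
      (stdNormalPDF (y / Real.sqrt t) / Real.sqrt t) y ∧
    HasDerivAt (fun t' : ℝ => gaussPosPart t' y)
      ((1 / 2) * (stdNormalPDF (y / Real.sqrt t) / Real.sqrt t)) t ∧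
    deriv (fun t' : ℝ => gaussPosPart t' y) t
      = (1 / 2) * deriv (deriv (fun z => gaussPosPart t z)) y := by
  have hs : 0 < Real.sqrt t := Real.sqrt_pos.2 ht
  have h1 : HasDerivAt (fun y' : ℝ => deriv (fun z => gaussPosPart t z) y')
      (stdNormalPDF (y / Real.sqrt t) / Real.sqrt t) y := by
    have h : (fun y' : ℝ => deriv (fun z => gaussPosPart t z) y')
        = fun y' => cdfN (y' / Real.sqrt t) := funext fun z => (gpp_dy t ht z).deriv
    rw [h]
    have := (cdfN_deriv (y / Real.sqrt t)).comp y
      ((hasDerivAt_id y).div_const (Real.sqrt t))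
    refine HasDerivAt.congr_deriv this ?_
    ring
  have h2 : HasDerivAt (fun t' : ℝ => gaussPosPart t' y)
      ((1 / 2) * (stdNormalPDF (y / Real.sqrt t) / Real.sqrt t)) t := by
    have hsq := Real.hasDerivAt_sqrt ht.ne'
    have hdiv := (hasDerivAt_const t y).div hsq hs.ne'
    have h3 := hsq.mul ((GG_deriv (y / Real.sqrt t)).comp t hdiv)
    have h4 : (fun t' : ℝ => gaussPosPart t' y) =ᶠ[nhds t]
        fun t' => Real.sqrt t' * GG (y / Real.sqrt t') := by
      filter_upwards [lt_mem_nhds ht] with s hs'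
      exact gpp_eq s hs' y
    refine HasDerivAt.congr_of_eventuallyEq ?_ h4
    refine HasDerivAt.congr_deriv h3 ?_
    simp only [GG, Function.comp, Pi.div_apply]
    field_simp
    ring
  refine ⟨h1, h2, ?_⟩
  rw [h2.deriv]
  exact congrArg _ h1.deriv.symm
end

section
/- Let (B_t)_{t ≥ 0} be a standard Brownian motion and let 0 < s < s' < u. Then E[(1_{B_s > 0} − 1_{B_u > 0})(1_{B_{s'} > 0} − 1_{B_u > 0})] = (1/(2π)) · (arctan(√((u − s')/s')) + arctan(√((u − s)/s)) − arctan(√((s' − s)/s))). -/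
open MeasureTheory Set

/-- A standard Brownian motion: a real-valued process with continuous paths, starting at `0`,
with independent increments, the increment `B_t − B_s` (for `0 ≤ s ≤ t`) being a centered
Gaussian of variance `t − s`. -/
structure IsStandardBrownianMotion {Ω : Type*} [MeasurableSpace Ω] (P : Measure Ω)
    (B : ℝ → Ω → ℝ) : Prop where
  isProbabilityMeasure : IsProbabilityMeasure P
  continuous_paths : ∀ ω, ContinuousOn (fun t => B t ω) (Ici 0)
  start_at_zero : ∀ ω, B 0 ω = 0
  measurable : ∀ t, Measurable (B t)
  indep_increments : ∀ (n : ℕ) (t : ℕ → ℝ), Monotone t → (∀ i, 0 ≤ t i) →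
    ProbabilityTheory.iIndepFun
      (fun i : Fin n => fun ω => B (t (i + 1)) ω - B (t i) ω) P
  increment_law : ∀ s t : ℝ, 0 ≤ s → s ≤ t →
    P.map (fun ω => B t ω - B s ω) = ProbabilityTheory.gaussianReal 0 (Real.toNNReal (t - s))


lemma gauss_sector (S : Set (ℝ × ℝ)) (hS : MeasurableSet S) (a b : ℝ) (ha : -Real.pi ≤ a)
    (hab : a ≤ b) (hb : b ≤ Real.pi)
    (h : ∀ r θ : ℝ, 0 < r → -Real.pi < θ → θ < Real.pi →
      ((r * Real.cos θ, r * Real.sin θ) ∈ S ↔ a < θ ∧ θ < b)) :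
    ((ProbabilityTheory.gaussianReal 0 1).prod (ProbabilityTheory.gaussianReal 0 1)).real S
      = (b - a) / (2 * Real.pi) := by
  have hpi := Real.pi_pos
  rw [← integral_indicator_one hS, ProbabilityTheory.gaussianReal_of_var_ne_zero _ one_ne_zero,
    prod_withDensity (ProbabilityTheory.measurable_gaussianPDF _ _)
      (ProbabilityTheory.measurable_gaussianPDF _ _),
    integral_withDensity_eq_integral_toReal_smul]
  rotate_left
  · exact ((ProbabilityTheory.measurable_gaussianPDF _ _).comp measurable_fst).mul
      ((ProbabilityTheory.measurable_gaussianPDF _ _).comp measurable_snd)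
  · refine Filter.Eventually.of_forall fun x => ?_
    exact ENNReal.mul_lt_top ProbabilityTheory.gaussianPDF_lt_top
      ProbabilityTheory.gaussianPDF_lt_top
  rw [← Measure.volume_eq_prod, ← integral_comp_polarCoord_symm, polarCoord_target]
  have key : ∀ p ∈ Ioi (0:ℝ) ×ˢ Ioo (-Real.pi) Real.pi,
      p.1 • ((ProbabilityTheory.gaussianPDF 0 1 (polarCoord.symm p).1 *
        ProbabilityTheory.gaussianPDF 0 1 (polarCoord.symm p).2).toReal •
        S.indicator (1 : ℝ × ℝ → ℝ) (polarCoord.symm p))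
      = (p.1 ^ (1:ℝ) * Real.exp (-(1/2) * p.1 ^ (2:ℝ))) *
        ((Ioo a b).indicator (fun _ => (2 * Real.pi)⁻¹) p.2) := by
    rintro ⟨r, θ⟩ ⟨hr, h1, h2⟩
    simp only [mem_Ioi] at hr h1 h2
    have hh := h r θ hr h1 h2
    simp only [polarCoord_symm_apply, ENNReal.toReal_mul, ProbabilityTheory.toReal_gaussianPDF,
      ProbabilityTheory.gaussianPDFReal, smul_eq_mul, Real.rpow_one, Real.rpow_two]
    by_cases hm : (r * Real.cos θ, r * Real.sin θ) ∈ S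
    · rw [indicator_of_mem hm, indicator_of_mem (show θ ∈ Ioo a b from hh.1 hm)]
      have e : Real.exp (-(1/2) * r^2) = Real.exp (-(r * Real.cos θ - 0)^2 / (2 * ((1:NNReal):ℝ)))
          * Real.exp (-(r * Real.sin θ - 0)^2 / (2 * ((1:NNReal):ℝ))) := by
        rw [← Real.exp_add]
        congr 1
        push_cast
        linear_combination (-r^2/2) * (-(Real.sin_sq_add_cos_sq θ))
      have e2 : (2 * Real.pi)⁻¹ = (√(2 * Real.pi * ((1:NNReal):ℝ)))⁻¹ * (√(2 * Real.pi * ((1:NNReal):ℝ)))⁻¹ := by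
        rw [← mul_inv, Real.mul_self_sqrt (by positivity)]; simp
      rw [e, e2, Pi.one_apply]
      ring
    · rw [indicator_of_notMem hm, indicator_of_notMem (show θ ∉ Ioo a b from fun q => hm (hh.2 q))]
      simp
  rw [setIntegral_congr_fun (measurableSet_Ioi.prod measurableSet_Ioo) key,
    Measure.volume_eq_prod, setIntegral_prod_mul (fun r : ℝ => r ^ (1:ℝ) * Real.exp (-(1/2) * r ^ (2:ℝ))),
    integral_rpow_mul_exp_neg_mul_rpow (by norm_num) (by norm_num) (by norm_num),
    setIntegral_indicator measurableSet_Ioo,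
    inter_eq_self_of_subset_right (Ioo_subset_Ioo ha hb)]
  norm_num [Real.volume_real_Ioo_of_le hab, Real.rpow_neg_one]
  ring

lemma bm_pair {Ω : Type*} [MeasurableSpace Ω] (P : Measure Ω) (B : ℝ → Ω → ℝ)
    (hB : IsStandardBrownianMotion P B) (s t : ℝ) (hs : 0 < s) (hst : s < t) :
    P.map (fun ω => (B s ω / √s, (B t ω - B s ω) / √(t - s)))
      = (ProbabilityTheory.gaussianReal 0 1).prod (ProbabilityTheory.gaussianReal 0 1) := by
  have := hB.isProbabilityMeasure
  have ms := hB.measurable s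
  have mt := hB.measurable t
  have std : ∀ (X : Ω → ℝ) (v : ℝ), Measurable X → 0 < v →
      P.map X = ProbabilityTheory.gaussianReal 0 (Real.toNNReal v) →
      P.map (fun ω => X ω / √v) = ProbabilityTheory.gaussianReal 0 1 := by
    intro X v hX hv hl
    have : (fun ω => X ω / √v) = (fun x => x / √v) ∘ X := rfl
    rw [this, ← Measure.map_map (by fun_prop) hX, hl, ProbabilityTheory.gaussianReal_map_div_const]
    congr 1
    · simp
    · ext
      simp [Real.sq_sqrt hv.le, hv.le, hv.ne']
  have h0 : ∀ ω, B 0 ω = 0 := hB.start_at_zero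
  have l1 := std (B s) s ms hs (by simpa [h0] using hB.increment_law 0 s le_rfl hs.le)
  have l2 := std (fun ω => B t ω - B s ω) (t - s) (mt.sub ms) (by linarith)
    (hB.increment_law s t hs.le hst.le)
  have hi := hB.indep_increments 2 (fun i => if i = 0 then 0 else if i = 1 then s else t)
    (monotone_nat_of_le_succ (by
      intro n
      rcases n with _ | _ | n
      · simp [hs.le]
      · simp [hst.le]
      · simp))
    (by intro i; split_ifs <;> linarith)
  have hi2 := hi.indepFun (i := 0) (j := 1) (by decide)
  simp [h0] at hi2
  have hi3 := hi2.comp (φ := fun x => x / √s) (ψ := fun x => x / √(t - s)) (by fun_prop) (by fun_prop)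
  have := (ProbabilityTheory.indepFun_iff_map_prod_eq_prod_map_map (by fun_prop) (by fun_prop)).1 hi3
  simp only [Function.comp_def] at this
  rw [this, l1, l2]

lemma bm_half {Ω : Type*} [MeasurableSpace Ω] (P : Measure Ω) (B : ℝ → Ω → ℝ)
    (hB : IsStandardBrownianMotion P B) (s : ℝ) (hs : 0 < s) :
    P.real {ω | 0 < B s ω} = 1 / 2 := by
  have hpi := Real.pi_pos
  have ms := hB.measurable s
  have mt := hB.measurable (s + 1)
  have hS : MeasurableSet {p : ℝ × ℝ | 0 < p.1} := measurableSet_lt measurable_const measurable_fst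
  have := gauss_sector {p : ℝ × ℝ | 0 < p.1} hS (-(Real.pi/2)) (Real.pi/2) (by linarith)
    (by linarith) (by linarith) (by
      intro r θ hr h1 h2
      simp only [mem_ofPred_eq, mul_pos_iff_of_pos_left hr]
      constructor
      · intro h
        by_contra hc
        rw [not_and_or, not_lt, not_lt] at hc
        rcases hc with hc | hc
        · have := Real.cos_nonpos_of_pi_div_two_le_of_le (x := -θ) (by linarith) (by linarith)
          rw [Real.cos_neg] at this; linarith
        · have := Real.cos_nonpos_of_pi_div_two_le_of_le (x := θ) (by linarith) (by linarith)
          linarith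
      · intro h
        exact Real.cos_pos_of_mem_Ioo h)
  rw [← bm_pair P B hB s (s+1) hs (by linarith), map_measureReal_apply (by fun_prop) hS] at this
  have e : (fun ω => (B s ω / √s, (B (s+1) ω - B s ω) / √(s + 1 - s))) ⁻¹' {p : ℝ × ℝ | 0 < p.1}
      = {ω | 0 < B s ω} := by
    ext ω
    simp [div_pos_iff_of_pos_right (Real.sqrt_pos.2 hs)]
  rw [e] at this
  rw [this]; field_simp; ring

lemma bm_quad {Ω : Type*} [MeasurableSpace Ω] (P : Measure Ω) (B : ℝ → Ω → ℝ)
    (hB : IsStandardBrownianMotion P B) (s t : ℝ) (hs : 0 < s) (hst : s < t) :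
    P.real {ω | 0 < B s ω ∧ 0 < B t ω} = 1 / 2 - Real.arctan (√((t - s) / s)) / (2 * Real.pi) := by
  have hpi := Real.pi_pos
  have ms := hB.measurable s
  have mt := hB.measurable t
  have ps := Real.sqrt_pos.2 hs
  have pt := Real.sqrt_pos.2 (sub_pos.2 hst)
  have hS : MeasurableSet {p : ℝ × ℝ | 0 < p.1 ∧ 0 < √s * p.1 + √(t-s) * p.2} :=
    (measurableSet_lt measurable_const measurable_fst).inter
      (measurableSet_lt measurable_const ((measurable_fst.const_mul _).add (measurable_snd.const_mul _)))
  have hal := Real.arctan_lt_pi_div_two (√s / √(t-s))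
  have hal2 := Real.arctan_pos.2 (show 0 < √s / √(t-s) by positivity)
  have := gauss_sector _ hS (-(Real.arctan (√s / √(t-s)))) (Real.pi/2) (by linarith)
    (by linarith) (by linarith) (by
      intro r θ hr h1 h2
      have e : √s * (r * Real.cos θ) + √(t-s) * (r * Real.sin θ)
        = r * (√s * Real.cos θ + √(t-s) * Real.sin θ) := by ring
      simp only [mem_ofPred_eq, e, mul_pos_iff_of_pos_left hr]
      have main : ∀ _ : -(Real.pi/2) < θ, ∀ _ : θ < Real.pi/2, 
          (0 < √s * Real.cos θ + √(t-s) * Real.sin θ ↔ -(Real.arctan (√s / √(t-s))) < θ) := by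
        intro a b
        have hc := Real.cos_pos_of_mem_Ioo ⟨a, b⟩
        rw [← Real.arctan_neg]
        nth_rw 3 [← Real.arctan_tan a b]
        rw [Real.arctan_lt_arctan_iff, Real.tan_eq_sin_div_cos, ← neg_div, div_lt_div_iff₀ pt hc]
        constructor <;> intro h <;> linarith
      constructor
      · rintro ⟨h, h'⟩
        have : -(Real.pi/2) < θ ∧ θ < Real.pi/2 := by
          by_contra hc
          rw [not_and_or, not_lt, not_lt] at hc
          rcases hc with hc | hc
          · have := Real.cos_nonpos_of_pi_div_two_le_of_le (x := -θ) (by linarith) (by linarith)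
            rw [Real.cos_neg] at this; linarith
          · have := Real.cos_nonpos_of_pi_div_two_le_of_le (x := θ) (by linarith) (by linarith)
            linarith
        exact ⟨(main this.1 this.2).1 h', this.2⟩
      · rintro ⟨h, h'⟩
        have h3 : -(Real.pi/2) < θ := by linarith
        exact ⟨Real.cos_pos_of_mem_Ioo ⟨h3, h'⟩, (main h3 h').2 h⟩)
  rw [← bm_pair P B hB s t hs hst, map_measureReal_apply (by fun_prop) hS] at this
  have e : (fun ω => (B s ω / √s, (B t ω - B s ω) / √(t - s))) ⁻¹'
      {p : ℝ × ℝ | 0 < p.1 ∧ 0 < √s * p.1 + √(t-s) * p.2}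
      = {ω | 0 < B s ω ∧ 0 < B t ω} := by
    ext ω
    simp [div_pos_iff_of_pos_right ps, mul_div_cancel₀ _ ps.ne', mul_div_cancel₀ _ pt.ne']
  rw [e] at this
  have e3 : √((t-s)/s) = (√s / √(t-s))⁻¹ := by
    rw [Real.sqrt_div (sub_pos.2 hst).le, inv_div]
  rw [this, e3, Real.arctan_inv_of_pos (by positivity)]; field_simp; ring

/-- For a standard Brownian motion and `0 < s < s' < u`,
`E[(1_{B_s>0} − 1_{B_u>0})(1_{B_{s'}>0} − 1_{B_u>0})]
  = (1/(2π)) (arctan √((u−s')/s') + arctan √((u−s)/s) − arctan √((s'−s)/s))`. -/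
theorem statement13 {Ω : Type*} [MeasurableSpace Ω] (P : Measure Ω) (B : ℝ → Ω → ℝ)
    (hB : IsStandardBrownianMotion P B) (s s' u : ℝ)
    (hs : 0 < s) (hss' : s < s') (hs'u : s' < u) :
    (∫ ω, ((if 0 < B s ω then (1:ℝ) else 0) - (if 0 < B u ω then 1 else 0))
        * ((if 0 < B s' ω then (1:ℝ) else 0) - (if 0 < B u ω then 1 else 0)) ∂P)
      = (1 / (2 * Real.pi)) *
        (Real.arctan (Real.sqrt ((u - s') / s')) + Real.arctan (Real.sqrt ((u - s) / s))
          - Real.arctan (Real.sqrt ((s' - s) / s))) := by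
  have hp := hB.isProbabilityMeasure
  have M : ∀ t, MeasurableSet {ω | 0 < B t ω} := fun t =>
    measurableSet_lt measurable_const (hB.measurable t)
  have M2 : ∀ t r, MeasurableSet {ω | 0 < B t ω ∧ 0 < B r ω} := fun t r => (M t).inter (M r)
  have I : ∀ {S : Set Ω}, MeasurableSet S → Integrable (S.indicator (1 : Ω → ℝ)) P :=
    fun hS => (integrable_const (1:ℝ)).indicator hS
  have e : ∀ ω, ((if 0 < B s ω then (1:ℝ) else 0) - (if 0 < B u ω then 1 else 0))
        * ((if 0 < B s' ω then (1:ℝ) else 0) - (if 0 < B u ω then 1 else 0))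
      = {ω | 0 < B s ω ∧ 0 < B s' ω}.indicator (1 : Ω → ℝ) ω
        - {ω | 0 < B s ω ∧ 0 < B u ω}.indicator (1 : Ω → ℝ) ω
        - {ω | 0 < B s' ω ∧ 0 < B u ω}.indicator (1 : Ω → ℝ) ω
        + {ω | 0 < B u ω}.indicator (1 : Ω → ℝ) ω := by
    intro ω
    by_cases h1 : 0 < B s ω <;> by_cases h2 : 0 < B s' ω <;> by_cases h3 : 0 < B u ω <;>
      simp [indicator, h1, h2, h3]
  simp_rw [e]
  have J1 : Integrable (fun ω => {ω | 0 < B s ω ∧ 0 < B s' ω}.indicator (1 : Ω → ℝ) ω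
        - {ω | 0 < B s ω ∧ 0 < B u ω}.indicator (1 : Ω → ℝ) ω) P := (I (M2 _ _)).sub (I (M2 _ _))
  have J2 : Integrable (fun ω => {ω | 0 < B s ω ∧ 0 < B s' ω}.indicator (1 : Ω → ℝ) ω
        - {ω | 0 < B s ω ∧ 0 < B u ω}.indicator (1 : Ω → ℝ) ω
        - {ω | 0 < B s' ω ∧ 0 < B u ω}.indicator (1 : Ω → ℝ) ω) P := J1.sub (I (M2 _ _))
  rw [integral_add J2 (I (M _)), integral_sub J1 (I (M2 _ _)),
    integral_sub (I (M2 _ _)) (I (M2 _ _)), integral_indicator_one (M2 _ _),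
    integral_indicator_one (M2 _ _), integral_indicator_one (M2 _ _), integral_indicator_one (M _),
    bm_quad P B hB s s' hs hss', bm_quad P B hB s u hs (hss'.trans hs'u),
    bm_quad P B hB s' u (hs.trans hss') hs'u, bm_half P B hB u (by linarith)]
  ring
end

section
/- There exists a constant C > 0 such that for every T > 0 and every ε ∈ (0, 1], ∫_0^T ( ∫∫_{[(u−ε)⁺, u]²} (1/ε²) · 1_{s < s'} · ( arctan(√((u − s')/s')) + arctan(√((u − s)/s)) − arctan(√((s' − s)/s)) ) ds ds' ) du ≤ C √T √ε, where the inner double integral is taken over pairs (s, s') ∈ ((u−ε)⁺, u]² with 0 < s < s'. -/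
open MeasureTheory Set

lemma aux_arctan (u s : ℝ) (hs : 0 < s) (hsu : s ≤ u) :
    Real.arctan (Real.sqrt ((u - s) / s)) ≤ Real.pi / 2 * Real.sqrt ((u - s) / u) := by
  have hu : 0 < u := hs.trans_le hsu
  have h0 : 0 ≤ (u - s) / s := div_nonneg (by linarith) hs.le
  have h := Real.mul_le_sin (Real.arctan_nonneg.2 (Real.sqrt_nonneg ((u - s) / s)))
    (Real.arctan_lt_pi_div_two _).le
  rw [Real.sin_arctan, Real.sq_sqrt h0, ← Real.sqrt_div h0] at h
  have e : (u - s) / s / (1 + (u - s) / s) = (u - s) / u := by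
    have : 1 + (u - s) / s = u / s := by field_simp; ring
    rw [this]; field_simp
  rw [e] at h
  have hp := Real.pi_pos
  calc _ = Real.pi / 2 * (2 / Real.pi * Real.arctan (Real.sqrt ((u - s) / s))) := by
        field_simp
    _ ≤ _ := by gcongr

lemma aux_pt (u s s' ε : ℝ) (hε : 0 < ε) (hs : s ∈ Ioc (max (u - ε) 0) u)
    (hs' : s' ∈ Ioc (max (u - ε) 0) u) :
    ‖(if s < s' then
              (1 / ε ^ 2) *
                (Real.arctan (Real.sqrt ((u - s') / s'))
                  + Real.arctan (Real.sqrt ((u - s) / s))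
                  - Real.arctan (Real.sqrt ((s' - s) / s)))
            else 0)‖ ≤ (1 / ε ^ 2) * (Real.pi * Real.sqrt (ε / u)) := by
  obtain ⟨h1, h2⟩ := hs
  obtain ⟨h3, h4⟩ := hs'
  obtain ⟨h5, h6⟩ := max_lt_iff.1 h1
  obtain ⟨h7, h8⟩ := max_lt_iff.1 h3
  have hu : 0 < u := h6.trans_le h2
  have hp := Real.pi_pos
  split_ifs with h
  · rw [norm_mul, Real.norm_of_nonneg (by positivity : (0:ℝ) ≤ 1 / ε ^ 2)]
    gcongr
    have a1 : Real.arctan (Real.sqrt ((u - s') / s')) ≤ Real.pi / 2 * Real.sqrt (ε / u) :=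
      (aux_arctan u s' h8 h4).trans (by gcongr; linarith)
    have a2 : Real.arctan (Real.sqrt ((u - s) / s)) ≤ Real.pi / 2 * Real.sqrt (ε / u) :=
      (aux_arctan u s h6 h2).trans (by gcongr; linarith)
    have a3 : Real.arctan (Real.sqrt ((s' - s) / s)) ≤ Real.arctan (Real.sqrt ((u - s) / s)) := by
      apply Real.arctan_strictMono.monotone
      gcongr
    have b1 := Real.arctan_nonneg.2 (Real.sqrt_nonneg ((u - s') / s'))
    have b2 := Real.arctan_nonneg.2 (Real.sqrt_nonneg ((u - s) / s))
    have b3 := Real.arctan_nonneg.2 (Real.sqrt_nonneg ((s' - s) / s))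
    rw [Real.norm_eq_abs, abs_le]
    constructor <;> linarith
  · simp; positivity

lemma aux_inner (f : ℝ → ℝ) (u ε K : ℝ) (hK : 0 ≤ K) (hε : 0 < ε)
    (hf : ∀ s ∈ Ioc (max (u - ε) 0) u, ‖f s‖ ≤ K) :
    ‖∫ s in Ioc (max (u - ε) 0) u, f s‖ ≤ K * ε := by
  refine (norm_setIntegral_le_of_norm_le_const (by simp) hf).trans ?_
  gcongr
  rw [Measure.real, Real.volume_Ioc]
  apply ENNReal.toReal_le_of_le_ofReal hε.le
  apply ENNReal.ofReal_le_ofReal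
  linarith [le_max_left (u - ε) 0]

/-- There is a constant `C > 0` such that for every `T > 0` and
`ε ∈ (0,1]`,
`∫_0^T (∫∫_{((u−ε)⁺, u]², s < s'} (1/ε²)(arctan √((u−s')/s') + arctan √((u−s)/s)
  − arctan √((s'−s)/s)) ds ds') du ≤ C √T √ε`. -/
theorem statement16 :
    ∃ C : ℝ, 0 < C ∧ ∀ T : ℝ, 0 < T → ∀ ε ∈ Ioc (0:ℝ) 1,
      (∫ u in (0:ℝ)..T,
          ∫ s' in Ioc (max (u - ε) 0) u, ∫ s in Ioc (max (u - ε) 0) u,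
            (if s < s' then
              (1 / ε ^ 2) *
                (Real.arctan (Real.sqrt ((u - s') / s'))
                  + Real.arctan (Real.sqrt ((u - s) / s))
                  - Real.arctan (Real.sqrt ((s' - s) / s)))
            else 0))
        ≤ C * Real.sqrt T * Real.sqrt ε := by
  refine ⟨2 * Real.pi, by positivity, fun T hT ε hε => ?_⟩
  have hε0 : 0 < ε := hε.1
  have hg : IntervalIntegrable (fun u : ℝ => Real.pi * Real.sqrt ε * u ^ (-(1/2) : ℝ))
      volume 0 T :=
    (intervalIntegral.intervalIntegrable_rpow' (by norm_num)).const_mul _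
  have hI : ∫ u in (0:ℝ)..T, Real.pi * Real.sqrt ε * u ^ (-(1/2) : ℝ)
      = 2 * Real.pi * Real.sqrt T * Real.sqrt ε := by
    rw [intervalIntegral.integral_const_mul, integral_rpow (Or.inl (by norm_num)),
      Real.sqrt_eq_rpow T]
    norm_num
    ring
  rw [← hI]
  refine (Real.le_norm_self _).trans
    (intervalIntegral.norm_integral_le_of_norm_le hT.le (Filter.Eventually.of_forall ?_) hg)
  intro u hu
  have hu0 : 0 < u := hu.1
  have hp := Real.pi_pos
  have key := aux_inner _ u ε _ (by positivity) hε0 (fun s' hs' =>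
    aux_inner _ u ε _ (by positivity) hε0 (fun s hs => aux_pt u s s' ε hε0 hs hs'))
  refine key.trans (le_of_eq ?_)
  rw [Real.rpow_neg hu0.le, ← Real.sqrt_eq_rpow, Real.sqrt_div hε0.le]
  field_simp
end

section
/- There exists a constant K > 0 with the following property. Let T > 0, δ ∈ (0, 1/2), C ≥ 0 and let x : [0, T] → ℝ satisfy |x(u) − x(v)| ≤ C |u − v|^δ for all u, v ∈ [0, T]. Then for every ε ∈ (0, 1] and every t ∈ [0, T], (1/ε) ∫_{(t−ε)⁺}^t x(u)⁺ · Φ( −x(t)/√(u + ε − t) ) du ≤ C ε^δ + K √ε, where Φ is the standard normal distribution function. -/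
open MeasureTheory Set

lemma aux_g_int : Integrable (fun x : ℝ => Real.exp (-x ^ 2 / 2) / Real.sqrt (2 * Real.pi)) := by
  have h := (integrable_exp_neg_mul_sq (b := 1/2) (by norm_num)).div_const (Real.sqrt (2 * Real.pi))
  refine h.congr (Filter.Eventually.of_forall fun x => ?_)
  simp only
  congr 2
  ring

lemma aux_xg_int : Integrable
    (fun x : ℝ => |x| * (Real.exp (-x ^ 2 / 2) / Real.sqrt (2 * Real.pi))) := by
  have h := ((integrable_mul_exp_neg_mul_sq (b := 1/2) (by norm_num)).norm).div_const
    (Real.sqrt (2 * Real.pi))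
  refine h.congr (Filter.Eventually.of_forall fun x => ?_)
  simp only [norm_mul, Real.norm_eq_abs, Real.abs_exp]
  rw [mul_div_assoc]
  congr 3
  ring

lemma aux_g_total : ∫ x : ℝ, Real.exp (-x ^ 2 / 2) / Real.sqrt (2 * Real.pi) = 1 := by
  rw [integral_div]
  have h := integral_gaussian (1/2)
  have e : (fun x : ℝ => Real.exp (-x ^ 2 / 2)) = fun x : ℝ => Real.exp (-(1/2) * x ^ 2) := by
    funext x; congr 1; ring
  rw [e, h]
  have : Real.pi / (1/2) = 2 * Real.pi := by ring
  rw [this]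
  have := Real.pi_pos
  exact div_self (by positivity)

lemma aux_nonneg (z : ℝ) : 0 ≤ stdNormalCDF z :=
  integral_nonneg fun x => by positivity

lemma aux_le_one (z : ℝ) : stdNormalCDF z ≤ 1 := by
  rw [← aux_g_total]
  exact setIntegral_le_integral aux_g_int (Filter.Eventually.of_forall fun x => by
    simp only [Pi.zero_apply]; positivity)

lemma aux_mul (z : ℝ) (hz : 0 ≤ z) : z * stdNormalCDF (-z) ≤
    ∫ x : ℝ, |x| * (Real.exp (-x ^ 2 / 2) / Real.sqrt (2 * Real.pi)) := by
  unfold stdNormalCDF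
  rw [← integral_const_mul]
  refine le_trans ?_ (setIntegral_le_integral (s := Iic (-z)) aux_xg_int
    (Filter.Eventually.of_forall fun x => by simp only [Pi.zero_apply]; positivity))
  refine setIntegral_mono_on (aux_g_int.integrableOn.const_mul z) aux_xg_int.integrableOn
    measurableSet_Iic fun x hx => ?_
  have hx' : x ≤ -z := hx
  have : z ≤ |x| := by
    have := neg_le_abs x
    linarith
  gcongr

/-- There is a constant `K > 0` such that: for every `T > 0`,
`δ ∈ (0,1/2)`, `C ≥ 0` and `x : [0,T] → ℝ` Hölder continuous of order `δ` with constant `C`,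
for every `ε ∈ (0,1]` and `t ∈ [0,T]`,
`(1/ε) ∫_{(t−ε)⁺}^t x(u)⁺ Φ(−x(t)/√(u+ε−t)) du ≤ C ε^δ + K √ε`. -/
theorem statement17 :
    ∃ K : ℝ, 0 < K ∧ ∀ T : ℝ, 0 < T → ∀ δ ∈ Ioo (0:ℝ) (1/2), ∀ C : ℝ, 0 ≤ C →
      ∀ x : ℝ → ℝ,
        (∀ u ∈ Icc (0:ℝ) T, ∀ v ∈ Icc (0:ℝ) T, |x u - x v| ≤ C * |u - v| ^ δ) →
        ∀ ε ∈ Ioc (0:ℝ) 1, ∀ t ∈ Icc (0:ℝ) T,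
          (1 / ε) * (∫ u in (max (t - ε) 0)..t,
              max (x u) 0 * stdNormalCDF (-(x t) / Real.sqrt (u + ε - t)))
            ≤ C * ε ^ δ + K * Real.sqrt ε := by
  set K0 : ℝ := ∫ x : ℝ, |x| * (Real.exp (-x ^ 2 / 2) / Real.sqrt (2 * Real.pi)) with hK0
  have hK0n : 0 ≤ K0 := integral_nonneg fun x => by positivity
  refine ⟨K0 + 1, by positivity, ?_⟩
  intro T hT δ hδ C hC x hx ε hε t ht
  obtain ⟨hε0, hε1⟩ := hε
  obtain ⟨ht0, htT⟩ := ht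
  obtain ⟨hδ0, hδ1⟩ := hδ
  set M : ℝ := C * ε ^ δ + (K0 + 1) * Real.sqrt ε with hM
  have hMn : 0 ≤ M := by positivity
  have hab : max (t - ε) 0 ≤ t := max_le (by linarith) ht0
  have key : ∀ u ∈ Set.uIoc (max (t - ε) 0) t,
      ‖max (x u) 0 * stdNormalCDF (-(x t) / Real.sqrt (u + ε - t))‖ ≤ M := by
    intro u hu
    rw [Set.uIoc_of_le hab] at hu
    obtain ⟨hu1, hu2⟩ := hu
    have hu3 : t - ε < u := lt_of_le_of_lt (le_max_left _ _) hu1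
    have hu4 : 0 < u := lt_of_le_of_lt (le_max_right _ _) hu1
    have hs : 0 < u + ε - t := by linarith
    have hr : 0 < Real.sqrt (u + ε - t) := Real.sqrt_pos.2 hs
    have hrε : Real.sqrt (u + ε - t) ≤ Real.sqrt ε := Real.sqrt_le_sqrt (by linarith)
    have hP := aux_nonneg (-(x t) / Real.sqrt (u + ε - t))
    have hP1 := aux_le_one (-(x t) / Real.sqrt (u + ε - t))
    have hh := hx u ⟨hu4.le, hu2.trans htT⟩ t ⟨ht0, htT⟩
    have hpow : |u - t| ^ δ ≤ ε ^ δ := by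
      refine Real.rpow_le_rpow (abs_nonneg _) ?_ hδ0.le
      rw [abs_le]; constructor <;> linarith
    have hh2 : |x u - x t| ≤ C * ε ^ δ := hh.trans (by gcongr)
    have hCε : 0 ≤ C * ε ^ δ := by positivity
    have hxu : max (x u) 0 ≤ max (x t) 0 + C * ε ^ δ := by
      have := (abs_le.1 hh2).2
      refine max_le ?_ ?_
      · linarith [le_max_left (x t) 0]
      · linarith [le_max_right (x t) 0]
    have hmain : max (x t) 0 * stdNormalCDF (-(x t) / Real.sqrt (u + ε - t))
        ≤ K0 * Real.sqrt ε := by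
      rcases le_total (x t) 0 with h | h
      · rw [max_eq_right h, zero_mul]; positivity
      · rw [max_eq_left h]
        have h1 := aux_mul (x t / Real.sqrt (u + ε - t)) (by positivity)
        rw [← hK0, ← neg_div] at h1
        calc x t * stdNormalCDF (-(x t) / Real.sqrt (u + ε - t))
            = (x t / Real.sqrt (u + ε - t) * stdNormalCDF (-(x t) / Real.sqrt (u + ε - t)))
                * Real.sqrt (u + ε - t) := by field_simp
          _ ≤ K0 * Real.sqrt (u + ε - t) := by gcongr
          _ ≤ K0 * Real.sqrt ε := by gcongr
    rw [Real.norm_eq_abs, abs_of_nonneg (mul_nonneg (le_max_right _ _) hP)]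
    have h2 := mul_le_mul_of_nonneg_right hxu hP
    have h3 := mul_le_mul_of_nonneg_left hP1 hCε
    have h4 := Real.sqrt_nonneg ε
    rw [add_mul] at h2
    rw [hM, add_mul]
    linarith
  have h := intervalIntegral.norm_integral_le_of_norm_le_const key
  have h5 := (Real.le_norm_self _).trans h
  have h6 : |t - max (t - ε) 0| ≤ ε := by
    rw [abs_of_nonneg (by linarith)]
    linarith [le_max_left (t - ε) 0]
  have h7 := h5.trans (mul_le_mul_of_nonneg_left h6 hMn)
  rw [one_div, inv_mul_le_iff₀ hε0]
  linarith
end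

section
/- Let (B_t)_{t ≥ 0} be a standard Brownian motion, T > 0 and δ ∈ (0, 1/2). Then there exists a nonnegative random variable C with E[C²] < ∞ such that almost surely, for every ε ∈ (0, 1] and every t ∈ [0, T], (1/ε) ∫_0^t B_u⁺ · 1_{B_{(u+ε) ∧ t} = 0} du ≤ C ε^δ. -/
open MeasureTheory Set

lemma aux_step (g : ℝ → ℝ) (A r : ℝ) (hA : 0 ≤ A) (hr0 : 0 < r) 
    (h : ∀ n k : ℕ, k < 2^n → |g (((k:ℝ)+1)/2^n) - g ((k:ℝ)/2^n)| ≤ A * r^n)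
    (n a b : ℕ) (hab : a ≤ b) (hb1 : b ≤ a + 1) (hb : b ≤ 2^n) :
    |g ((b:ℝ)/2^n) - g ((a:ℝ)/2^n)| ≤ A * r^n := by
  rcases Nat.lt_or_ge a b with h1 | h1
  · have : b = a + 1 := by omega
    subst this
    have := h n a (by omega)
    push_cast
    exact this
  · have : b = a := by omega
    subst this
    simp; positivity

lemma aux_dyad (g : ℝ → ℝ) (A r : ℝ) (hA : 0 ≤ A) (hr0 : 0 < r) (hr1 : r < 1)
    (hg : ContinuousOn g (Icc 0 1))
    (h : ∀ n k : ℕ, k < 2^n → |g (((k:ℝ)+1)/2^n) - g ((k:ℝ)/2^n)| ≤ A * r^n)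
    (x : ℝ) (hx : x ∈ Icc (0:ℝ) 1) (n : ℕ) :
    |g x - g ((⌊2^n * x⌋₊ : ℝ)/2^n)| ≤ A * (r/(1-r)) * r^n := by
  have h1r : 0 < 1 - r := by linarith
  have key : ∀ m : ℕ, |g ((⌊2^(n+m) * x⌋₊ : ℝ)/2^(n+m)) - g ((⌊2^n * x⌋₊ : ℝ)/2^n)|
      ≤ A * (r/(1-r)) * (r^n - r^(n+m)) := by
    intro m
    induction m with
    | zero => simp
    | succ m ih =>
      have e1 : g ((⌊2^(n+m) * x⌋₊ : ℝ)/2^(n+m))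
          = g (((2 * ⌊2^(n+m) * x⌋₊ : ℕ) : ℝ)/2^(n+m+1)) := by
        congr 1; push_cast; field_simp; ring
      have hx' : 0 ≤ 2^(n+m) * x := by have := hx.1; positivity
      have s := aux_step g A r hA hr0 h (n+m+1) (2 * ⌊2^(n+m) * x⌋₊) ⌊2^(n+m+1) * x⌋₊
        (by
          apply Nat.le_floor; push_cast
          have := Nat.floor_le hx'
          rw [pow_succ]; linarith)
        (by
          apply Nat.lt_succ_iff.mp
          rw [Nat.floor_lt (by have := hx.1; positivity)]
          push_cast
          have := Nat.lt_floor_add_one (2^(n+m) * x)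
          rw [pow_succ]; linarith)
        (by
          apply Nat.floor_le_of_le
          push_cast
          have := hx.2
          exact mul_le_of_le_one_right (by positivity) this)
      rw [← e1] at s
      have e2 : A * (r/(1-r)) * (r^n - r^(n+(m+1)))
         = A * r^(n+m+1) + A * (r/(1-r)) * (r^n - r^(n+m)) := by
        field_simp; ring
      rw [e2]
      exact (abs_sub_le _ _ _).trans (add_le_add s ih)
  have lim : Filter.Tendsto (fun m : ℕ => g ((⌊2^(n+m) * x⌋₊ : ℝ)/2^(n+m))) Filter.atTop (nhds (g x)) := by
    have c := hg x hx
    refine c.tendsto.comp ?_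
    rw [tendsto_nhdsWithin_iff]
    constructor
    · have t1 : Filter.Tendsto (fun m : ℕ => (2:ℝ)^(n+m)) Filter.atTop Filter.atTop := by
        have := tendsto_pow_atTop_atTop_of_one_lt (r := (2:ℝ)) (by norm_num)
        exact this.comp (Filter.tendsto_atTop_mono (fun m => Nat.le_add_left m n) Filter.tendsto_id)
      have := (tendsto_nat_floor_mul_div_atTop (R := ℝ) hx.1).comp t1
      refine this.congr fun m => ?_
      simp [mul_comm]
    · refine Filter.Eventually.of_forall fun m => ⟨by positivity, ?_⟩
      rw [div_le_one (by positivity)]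
      refine (Nat.floor_le (by have := hx.1; positivity)).trans ?_
      exact mul_le_of_le_one_right (by positivity) hx.2
  refine le_of_tendsto ((lim.sub_const _).abs) (Filter.Eventually.of_forall fun m => (key m).trans ?_)
  have : 0 ≤ r^(n+m) := by positivity
  gcongr
  linarith

lemma aux_holder (g : ℝ → ℝ) (A δ : ℝ) (hA : 0 ≤ A) (hδ : 0 < δ)
    (hg : ContinuousOn g (Icc 0 1))
    (h : ∀ n k : ℕ, k < 2^n → |g (((k:ℝ)+1)/2^n) - g ((k:ℝ)/2^n)| ≤ A * ((1/2:ℝ)^δ)^n)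
    (x y : ℝ) (hx : x ∈ Icc (0:ℝ) 1) (hy : y ∈ Icc (0:ℝ) 1) (hxy : x < y) :
    |g x - g y| ≤ A * ((1 + 2 * ((1/2:ℝ)^δ/(1-(1/2:ℝ)^δ))) / (1/2:ℝ)^δ) * (y - x)^δ := by
  set r := (1/2:ℝ)^δ with hr
  have hr0 : 0 < r := by positivity
  have hr1 : r < 1 := Real.rpow_lt_one (by norm_num) (by norm_num) hδ
  obtain ⟨n, hn1, hn2⟩ := exists_nat_pow_near_of_lt_one (x := y - x) (y := (1/2:ℝ)) (by linarith)
    (by linarith [hx.1, hy.2]) (by norm_num) (by norm_num)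
  have hyx : r ^ n * r ≤ (y-x)^δ := by
    rw [← pow_succ, hr, ← Real.rpow_natCast, ← Real.rpow_mul (by norm_num), mul_comm, Real.rpow_mul (by norm_num),
      Real.rpow_natCast]
    exact Real.rpow_le_rpow (by positivity) hn1.le hδ.le
  have a1 := aux_dyad g A r hA hr0 hr1 hg h x hx n
  have a2 := aux_dyad g A r hA hr0 hr1 hg h y hy n
  have hn3 : 2^n * y ≤ 2^n * x + 1 := by
    have : (2:ℝ)^n * (y - x) ≤ 2^n * (1/2)^n := by gcongr
    rw [← mul_pow] at this
    norm_num at this; linarith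
  have hx2 : 0 ≤ 2^n * x := by have := hx.1; positivity
  have a3 := aux_step g A r hA hr0 h n ⌊2^n * x⌋₊ ⌊2^n * y⌋₊
    (Nat.floor_mono (by gcongr))
    (by rw [← Nat.floor_add_one hx2]; exact Nat.floor_mono hn3)
    (by
      apply Nat.floor_le_of_le
      push_cast
      exact mul_le_of_le_one_right (by positivity) hy.2)
  have h1r : 0 < 1 - r := by linarith
  have fin : A * ((1 + 2 * (r/(1-r))) / r) * (r^n * r) ≤ A * ((1 + 2 * (r/(1-r))) / r) * (y - x)^δ := by
    gcongr
  refine le_trans ?_ fin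
  have e : A * ((1 + 2 * (r/(1-r))) / r) * (r^n * r) = A * r^n + 2 * (A * (r/(1-r)) * r^n) := by
    field_simp
  rw [e]
  rw [abs_le] at *
  constructor <;> linarith [a1.1, a1.2, a2.1, a2.2, a3.1, a3.2]

open scoped ENNReal in
lemma aux_moment {Ω : Type*} [MeasurableSpace Ω] (P : Measure Ω) (B : ℝ → Ω → ℝ)
    (hB : IsStandardBrownianMotion P B) (s t : ℝ) (hs : 0 ≤ s) (hst : s ≤ t) (p : ℕ) (c : ℝ) :
    ∫⁻ ω, ‖c * (B t ω - B s ω)‖ₑ ^ p ∂P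
      = ‖c * Real.sqrt (t - s)‖ₑ ^ p * ∫⁻ x, ‖x‖ₑ ^ p ∂(ProbabilityTheory.gaussianReal 0 1) := by
  have hm : Measurable (fun ω => B t ω - B s ω) := (hB.measurable t).sub (hB.measurable s)
  have e1 : ∫⁻ ω, ‖c * (B t ω - B s ω)‖ₑ ^ p ∂P
      = ∫⁻ x, ‖c * x‖ₑ ^ p ∂(P.map (fun ω => B t ω - B s ω)) := by
    rw [lintegral_map (by fun_prop) hm]
  have e2 : ProbabilityTheory.gaussianReal 0 (Real.toNNReal (t - s))
      = (ProbabilityTheory.gaussianReal 0 1).map (Real.sqrt (t-s) * ·) := by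
    rw [ProbabilityTheory.gaussianReal_map_const_mul]
    congr 1
    · simp
    · ext
      simp [Real.sq_sqrt (sub_nonneg.2 hst), hst]
  rw [e1, hB.increment_law s t hs hst, e2, lintegral_map (by fun_prop) (by fun_prop),
    ← lintegral_const_mul _ (by fun_prop)]
  congr 1
  ext x
  rw [← mul_assoc, enorm_mul, mul_pow]

lemma aux_gauss_fin (p : ℕ) :
    ∫⁻ x, ‖x‖ₑ ^ p ∂(ProbabilityTheory.gaussianReal 0 1) ≠ ⊤ := by
  rcases Nat.eq_zero_or_pos p with rfl | hp
  · simp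
  have h := (ProbabilityTheory.memLp_id_gaussianReal (μ := 0) (v := 1) (p : NNReal)).2
  have := lintegral_rpow_enorm_lt_top_of_eLpNorm_lt_top (by simp; omega) (by simp) h
  simpa using this.ne

lemma aux_S {Ω : Type*} [MeasurableSpace Ω] (P : Measure Ω) (B : ℝ → Ω → ℝ)
    (hB : IsStandardBrownianMotion P B) (T : ℝ) (hT : 0 < T)
    (δ : ℝ) (hδ : δ ∈ Ioo (0:ℝ) (1/2)) :
    ∃ S : Ω → ENNReal, Measurable S ∧ ∫⁻ ω, S ω ∂P ≠ ⊤ ∧ ∀ ω, S ω ≠ ⊤ → ∀ n k : ℕ, k < 2^n →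
      |B (T * (((k:ℝ)+1)/2^n)) ω - B (T * ((k:ℝ)/2^n)) ω|
        ≤ Real.sqrt (1 + (S ω).toReal) * ((1/2:ℝ)^δ)^n := by
  set r := (1/2:ℝ)^δ with hr
  have hr0 : 0 < r := by positivity
  have hq : r⁻¹ * Real.sqrt (1/2) < 1 := by
    rw [Real.sqrt_eq_rpow, inv_mul_lt_one₀ hr0]
    exact Real.rpow_lt_rpow_of_exponent_gt (by norm_num) (by norm_num) hδ.2
  have hq0 : 0 ≤ r⁻¹ * Real.sqrt (1/2) := by positivity
  obtain ⟨p0, hp0⟩ := exists_pow_lt_of_lt_one (show (0:ℝ) < 1/2 by norm_num) hq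
  set p := p0 + 2 with hp
  have hpq : (r⁻¹ * Real.sqrt (1/2))^p < 1/2 :=
    (pow_le_pow_of_le_one hq0 hq.le (by omega)).trans_lt hp0
  let D : ℕ → ℕ → Ω → ℝ := fun n k ω => B (T * (((k:ℝ)+1)/2^n)) ω - B (T * ((k:ℝ)/2^n)) ω
  have hD : ∀ n k, Measurable (D n k) := fun n k => (hB.measurable _).sub (hB.measurable _)
  have hDm : ∀ n k, Measurable (fun ω => ‖(r⁻¹)^n * D n k ω‖ₑ ^ p) := fun n k => by
    have := hD n k
    fun_prop
  refine ⟨fun ω => ∑' n, ∑ k ∈ Finset.range (2^n), ‖(r⁻¹)^n * D n k ω‖ₑ ^ p, ?_, ?_, ?_⟩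
  · exact Measurable.tsum fun n => Finset.measurable_fun_sum _ fun k _ => hDm n k
  · rw [lintegral_tsum fun n => (Finset.measurable_fun_sum _ fun k _ => hDm n k).aemeasurable]
    have e : ∀ n, ∫⁻ ω, ∑ k ∈ Finset.range (2^n), ‖(r⁻¹)^n * D n k ω‖ₑ ^ p ∂P
        = ENNReal.ofReal (Real.sqrt T ^ p * (2 * (r⁻¹ * Real.sqrt (1/2))^p)^n)
          * ∫⁻ x, ‖x‖ₑ ^ p ∂(ProbabilityTheory.gaussianReal 0 1) := by
      intro n
      rw [lintegral_finsetSum _ fun k _ => hDm n k]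
      have : ∀ k ∈ Finset.range (2^n), ∫⁻ ω, ‖(r⁻¹)^n * D n k ω‖ₑ ^ p ∂P
          = ENNReal.ofReal (((r⁻¹)^n * (Real.sqrt T * Real.sqrt (1/2)^n))^p)
          * ∫⁻ x, ‖x‖ₑ ^ p ∂(ProbabilityTheory.gaussianReal 0 1) := by
        intro k _
        have h1 := aux_moment P B hB (T * ((k:ℝ)/2^n)) (T * (((k:ℝ)+1)/2^n)) (by positivity)
          (by gcongr; linarith) p ((r⁻¹)^n)
        have h2 : Real.sqrt (T * (((k:ℝ)+1)/2^n) - T * ((k:ℝ)/2^n))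
            = Real.sqrt T * Real.sqrt (1/2)^n := by
          rw [Real.sqrt_eq_iff_mul_self_eq_of_pos (by positivity)]
          have : Real.sqrt (1/2)^n * Real.sqrt (1/2)^n = 1/2^n := by
            rw [← mul_pow, Real.mul_self_sqrt (by norm_num)]; simp
          calc _ = (Real.sqrt T * Real.sqrt T) * (Real.sqrt (1/2)^n * Real.sqrt (1/2)^n) := by ring
            _ = _ := by rw [this, Real.mul_self_sqrt hT.le]; field_simp; ring
        rw [h2] at h1
        rw [h1, ENNReal.ofReal_pow (by positivity), Real.enorm_of_nonneg (by positivity)]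
      rw [Finset.sum_congr rfl this, Finset.sum_const, Finset.card_range, nsmul_eq_mul, ← mul_assoc]
      congr 1
      rw [← ENNReal.ofReal_natCast, ← ENNReal.ofReal_mul (by positivity)]
      congr 1
      push_cast
      ring
    simp_rw [e]
    rw [ENNReal.tsum_mul_right]
    refine ENNReal.mul_ne_top ?_ (aux_gauss_fin p)
    apply Summable.tsum_ofReal_ne_top
    apply Summable.mul_left
    exact summable_geometric_of_lt_one (by positivity) (by linarith)
  · intro ω hω n k hk
    set S := ∑' n, ∑ k ∈ Finset.range (2^n), ‖(r⁻¹)^n * D n k ω‖ₑ ^ p with hS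
    have h1 : ‖(r⁻¹)^n * D n k ω‖ₑ ^ p ≤ S :=
      (Finset.single_le_sum (f := fun k => ‖(r⁻¹)^n * D n k ω‖ₑ ^ p) (fun _ _ => zero_le)
        (Finset.mem_range.2 hk)).trans
        (ENNReal.le_tsum (f := fun n => ∑ k ∈ Finset.range (2^n), ‖(r⁻¹)^n * D n k ω‖ₑ ^ p) n)
    have h2 := ENNReal.toReal_mono hω h1
    simp only [ENNReal.toReal_pow, toReal_enorm, Real.norm_eq_abs] at h2
    set y := |(r⁻¹)^n * D n k ω| with hy
    have hy0 : 0 ≤ y := abs_nonneg _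
    have h3 : y ≤ Real.sqrt (1 + S.toReal) := by
      apply Real.le_sqrt_of_sq_le
      have : 0 ≤ S.toReal := ENNReal.toReal_nonneg
      rcases le_total y 1 with h | h
      · nlinarith
      · have := pow_le_pow_right₀ h (show 2 ≤ p by omega)
        linarith
    have h4 : |D n k ω| = y * r^n := by
      rw [hy, abs_mul, abs_of_pos (pow_pos (inv_pos.2 hr0) n), mul_right_comm, ← mul_pow,
        inv_mul_cancel₀ hr0.ne', one_pow, one_mul]
    change |D n k ω| ≤ _
    rw [h4]
    gcongr

lemma aux_zero {Ω : Type*} [MeasurableSpace Ω] (P : Measure Ω) (B : ℝ → Ω → ℝ)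
    (hB : IsStandardBrownianMotion P B) :
    ∀ᵐ ω ∂P, ∀ᵐ u : ℝ, 0 < u → B u ω ≠ 0 := by
  have := hB.isProbabilityMeasure
  have hmeas : Measurable (Function.uncurry (fun u ω => B (max u 0) ω)) := by
    apply measurable_uncurry_of_continuous_of_measurable
    · intro ω
      exact (hB.continuous_paths ω).comp_continuous (by fun_prop) (fun u => mem_Ici.2 (le_max_right _ _))
    · exact fun i => hB.measurable _
  have h : ∀ᵐ u : ℝ, ∀ᵐ ω ∂P, 0 < u → B (max u 0) ω ≠ 0 := by
    refine Filter.Eventually.of_forall fun u => ?_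
    by_cases hu : 0 < u
    · have hl := hB.increment_law 0 u le_rfl hu.le
      simp only [hB.start_at_zero, sub_zero] at hl
      have : NullSingletonClass (ProbabilityTheory.gaussianReal 0 u.toNNReal) :=
        ProbabilityTheory.nullSingletonClass_gaussianReal (by simpa using hu)
      have h0 : P.map (fun ω => B u ω) {0} = 0 := by rw [hl]; exact measure_singleton 0
      rw [Measure.map_apply (hB.measurable u) (measurableSet_singleton 0)] at h0
      rw [max_eq_left hu.le]
      simp only [hu, true_imp_iff]
      rw [ae_iff]
      simpa [Set.preimage] using h0
    · simp [hu]
  rw [Measure.ae_ae_comm] at h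
  · filter_upwards [h] with ω hω
    filter_upwards [hω] with u hu h0
    have := hu h0
    rwa [max_eq_left h0.le] at this
  · have : {x : ℝ × Ω | 0 < x.1 → B (max x.1 0) x.2 ≠ 0}
        = {x : ℝ × Ω | 0 < x.1}ᶜ ∪ (Function.uncurry (fun u ω => B (max u 0) ω) ⁻¹' {0})ᶜ := by
      ext x
      simp [Function.uncurry, imp_iff_not_or]
    rw [this]
    exact (measurableSet_lt measurable_const measurable_fst).compl.union
      (hmeas (measurableSet_singleton 0)).compl

lemma aux_det (f : ℝ → ℝ) (T K δ : ℝ) (hδ : 0 < δ) (hK : 0 ≤ K)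
    (hf : ∀ u t, 0 ≤ u → u < t → t ≤ T → |f u - f t| ≤ K * (t - u)^δ)
    (hz : ∀ᵐ u : ℝ, 0 < u → f u ≠ 0) (ε : ℝ) (hε : 0 < ε) (t : ℝ) (ht : t ∈ Icc 0 T) :
    (1 / ε) * (∫ u in (0:ℝ)..t,
            max (f u) 0 * (if f (min (u + ε) t) = 0 then (1:ℝ) else 0)) ≤ K * ε ^ δ := by
  have hz' : ∀ᵐ u : ℝ, 0 < u + ε → f (u + ε) ≠ 0 :=
    (measurePreserving_add_right volume ε).quasiMeasurePreserving.ae hz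
  rw [intervalIntegral.integral_of_le ht.1, one_div, inv_mul_le_iff₀ hε]
  have hint : Integrable ((Ioc (t-ε) t).indicator (fun _ => K * ε^δ)) (volume : Measure ℝ) := by
    rw [integrable_indicator_iff measurableSet_Ioc]
    exact integrableOn_const (by simp)
  have hnt : ∀ᵐ u : ℝ, u ≠ t - ε := by
    exact Measure.ae_ne volume (t - ε)
  have hnt' : ∀ᵐ u : ℝ, u ≠ t := by
    exact Measure.ae_ne volume t
  calc _ ≤ ∫ u in Ioc 0 t, (Ioc (t-ε) t).indicator (fun _ => K * ε^δ) u := by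
        refine integral_mono_of_nonneg ?_ hint.integrableOn ?_
        · refine Filter.Eventually.of_forall fun u => ?_
          simp only [Pi.zero_apply]
          split_ifs <;> simp
        · rw [Filter.EventuallyLE, ae_restrict_iff' measurableSet_Ioc]
          filter_upwards [hz', hnt, hnt'] with u h1 h2 h3 hu
          rcases lt_or_gt_of_ne h2 with h | h
          · rw [min_eq_left (by linarith), if_neg (h1 (by linarith [hu.1])), mul_zero]
            apply indicator_nonneg
            intros; positivity
          · rw [indicator_of_mem (show u ∈ Ioc (t-ε) t from ⟨h, hu.2⟩), min_eq_right (by linarith)]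
            split_ifs with h0
            · have hut : u < t := lt_of_le_of_ne hu.2 h3
              have := hf u t hu.1.le hut ht.2
              rw [h0, sub_zero] at this
              rw [mul_one]
              have h5 : (t-u)^δ ≤ ε^δ := Real.rpow_le_rpow (by linarith) (by linarith) hδ.le
              have h6 : K * (t-u)^δ ≤ K * ε^δ := by gcongr
              apply max_le
              · linarith [le_abs_self (f u)]
              · positivity
            · rw [mul_zero]; positivity
    _ ≤ ∫ u, (Ioc (t-ε) t).indicator (fun _ => K * ε^δ) u := by
        apply setIntegral_le_integral hint
        refine Filter.Eventually.of_forall fun u => ?_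
        apply indicator_nonneg
        intros; positivity
    _ = ε * (K * ε^δ) := by
        rw [integral_indicator measurableSet_Ioc]
        simp [hε.le]

theorem statement18 {Ω : Type*} [MeasurableSpace Ω] (P : Measure Ω) (B : ℝ → Ω → ℝ)
    (hB : IsStandardBrownianMotion P B) (T : ℝ) (hT : 0 < T)
    (δ : ℝ) (hδ : δ ∈ Ioo (0:ℝ) (1/2)) :
    ∃ C : Ω → ℝ, Measurable C ∧ (∀ ω, 0 ≤ C ω) ∧
      Integrable (fun ω => (C ω) ^ 2) P ∧
      ∀ᵐ ω ∂P, ∀ ε ∈ Ioc (0:ℝ) 1, ∀ t ∈ Icc (0:ℝ) T,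
        (1 / ε) * (∫ u in (0:ℝ)..t,
            max (B u ω) 0 * (if B (min (u + ε) t) ω = 0 then (1:ℝ) else 0))
          ≤ C ω * ε ^ δ := by
  have := hB.isProbabilityMeasure
  obtain ⟨S, hSm, hSi, hS⟩ := aux_S P B hB T hT δ hδ
  set M : ℝ := (1 + 2 * ((1/2:ℝ)^δ/(1-(1/2:ℝ)^δ))) / (1/2:ℝ)^δ / T^δ with hM
  have hr1 : (1/2:ℝ)^δ < 1 := Real.rpow_lt_one (by norm_num) (by norm_num) hδ.1
  have hM0 : 0 ≤ M := by
    have : 0 < 1 - (1/2:ℝ)^δ := by linarith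
    positivity
  refine ⟨fun ω => Real.sqrt (1 + (S ω).toReal) * M, ?_, fun ω => by positivity, ?_, ?_⟩
  · exact ((measurable_const.add hSm.ennreal_toReal).sqrt).mul_const _
  · have : (fun ω => (Real.sqrt (1 + (S ω).toReal) * M) ^ 2)
        = fun ω => (1 + (S ω).toReal) * M^2 := by
      ext ω
      rw [mul_pow, Real.sq_sqrt (by positivity)]
    rw [this]
    exact ((integrable_const _).add
      (integrable_toReal_of_lintegral_ne_top hSm.aemeasurable hSi)).mul_const _
  · filter_upwards [aux_zero P B hB, ae_lt_top hSm hSi] with ω hz hfin ε hε t ht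
    refine aux_det (fun u => B u ω) T _ δ hδ.1 (by positivity) ?_ hz ε hε.1 t ht
    intro u t hu hut htT
    have hg : ContinuousOn (fun x => B (T * x) ω) (Icc 0 1) := by
      refine (hB.continuous_paths ω).comp (by fun_prop) ?_
      intro x hx
      exact mul_nonneg hT.le hx.1
    have h := aux_holder (fun x => B (T * x) ω) (Real.sqrt (1 + (S ω).toReal)) δ (by positivity)
      hδ.1 hg (hS ω hfin.ne) (u/T) (t/T) ⟨by positivity, (div_le_one hT).2 (by linarith)⟩
      ⟨div_nonneg (by linarith) hT.le, (div_le_one hT).2 htT⟩ (by gcongr)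
    simp only [mul_div_cancel₀ _ hT.ne'] at h
    rw [← sub_div, Real.div_rpow (by linarith) hT.le] at h
    refine h.trans (le_of_eq ?_)
    rw [hM]
    ring
end
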